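/- Let n,m ≥ 1, 0<α<mn, and let T_α^m be a multilinear fractional operator with kernel K_α satisfying the size condition and the smoothness condition with exponent 0<γ≤1. Let 0<δ<min{γ, (mn−α)/m}, set α̃=α+mδ, and let p⃗=(p_1,…,p_m) be a vector of exponents with p>n/α̃. Let b=(b_1,…,b_m) with b_i ∈ Λ(δ) for every i. Let δ̃ ≤ δ and let (w,v⃗) be a pair of weights in the class H_m(p⃗, α̃, δ̃) (for some fixed splitting α̃ = Σ α̃_i with 0<α̃_i<n), such that v_i^{−p_i'} ∈ RH_m for every i with 1<p_i≤∞. Then there is a constant C>0 such that for every ball B and every f⃗=(f_1,…,f_m) with f_i v_i ∈ L^{p_i}(ℝ^n): (‖w χ_B‖_∞ / |B|^{1+δ̃/n}) ∫_B |𝒯^m_{α,b} f⃗(x) − (𝒯^m_{α,b} f⃗)_B| dx ≤ C ∏_{i=1}^m ‖f_i v_i‖_{L^{p_i}}. -/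

import Mathlib

/-!
On a ball `B = B(c,R)` the oscillation of the commutator is, up to the factor `2` of `osc_le`, bounded
by its mean deviation from any constant. The constant chosen in `exists_const_close` is the integral
over the far region `((2B)^m)ᶜ` of the integrand with `x` replaced by the centre `c`. It remains to
bound the near part of the commutator in `L^1(B)` and the far difference uniformly on `B`, both by
products of `‖f_i v_i‖_{p_i}` and the factors of the class `H_m`.

For the far part (`global_estimate`), the smoothness of the kernel and the Lipschitz regularity of the
symbols give the pointwise bound `R^δ S^{-(mn - α̃ + δ)}` with `S = ∑ |c - y_i|`. The exponent is the
sum of the decay exponents `e_i = n - α̃_i + δ/m`, and `S` is at least comparable to each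
`|B|^{1/n} + |c - y_i|`, so the bound splits into a product; Hölder's inequality in each variable
finishes.

For the near part (`local_estimate`), the size condition and the Lipschitz bounds give the singularity
`S^{-(mn - α̃)}` with `S = ∑ |x - y_i|`, which is at most `∏ |x - y_i|^{-κ_i}` whenever
`∑ κ_i = mn - α̃`. The integral in `y` becomes a product of one-variable fractional integrals over
`2B`, and Hölder's inequality on `B` with `m` equal exponents reduces matters to the `L^m(B)` norm of
each of them (`local_factor`). That norm is finite when `κ_i < n (1 - (1 - 1/m) / p_i)`: for
`1 < p_i ≤ ∞` the reverse Hölder condition of order `m` on `v_i^{-p_i'}` compensates the passage from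
`L^1` to `L^m`. The hypothesis `1/p < α̃/n` makes an admissible choice of the `κ_i` possible
(`exists_split`).

The commutator is a Bochner integral, hence `0` where the integrand is not integrable. This is
harmless: since the far differences are always integrable, failure of far integrability at `c` forces
it at every point of `B`, and then the commutator vanishes on `B`.
-/


open MeasureTheory Metric Set
open scoped ENNReal NNReal BigOperators
open scoped Classical

noncomputable section

/-- Euclidean space `ℝⁿ`. -/
abbrev Rn (n : ℕ) : Type := EuclideanSpace ℝ (Fin n)

/-- The `q`-"norm" of a nonnegative function with respect to the measure `μ`,
for `q ∈ [1,∞]`; `q = ∞` gives the essential supremum. -/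
noncomputable def LpNormE {α : Type*} [MeasurableSpace α] (μ : Measure α)
    (g : α → ℝ≥0∞) (q : ℝ≥0∞) : ℝ≥0∞ :=
  if q = ∞ then essSup g μ else (∫⁻ x, g x ^ q.toReal ∂μ) ^ (1 / q.toReal)

/-- Conjugate exponent in `[1,∞]`. -/
noncomputable def conjE (q : ℝ≥0∞) : ℝ≥0∞ :=
  if q = 1 then ∞ else if q = ∞ then 1 else ENNReal.ofReal (q.toReal / (q.toReal - 1))

/-- Real-valued conjugate exponent of `q ∈ (1,∞]`. -/
noncomputable def conjR (q : ℝ≥0∞) : ℝ :=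
  if q = ∞ then 1 else q.toReal / (q.toReal - 1)

/-- A weight: measurable, a.e. positive and finite, and locally integrable. -/
def IsWeight (n : ℕ) (u : Rn n → ℝ≥0∞) : Prop :=
  Measurable u ∧ (∀ᵐ x ∂(volume : Measure (Rn n)), 0 < u x ∧ u x < ∞) ∧
    ∀ (c : Rn n) (R : ℝ), 0 < R → ∫⁻ x in ball c R, u x < ∞

/-- The `i`-th factor in the `H_m(p,β,δ̃)` condition over the ball `B(c,R)`
(`δ` is the fixed ambient parameter, `β i` the splitting of `β`). For `p i = 1`
the conjugate exponent is `∞` and the factor is an essential supremum. -/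
noncomputable def HmFactor (n m : ℕ) (δ : ℝ) (β : Fin m → ℝ) (p : Fin m → ℝ≥0∞)
    (v : Fin m → Rn n → ℝ≥0∞) (c : Rn n) (R : ℝ) (i : Fin m) : ℝ≥0∞ :=
  LpNormE volume
    (fun y => (v i y)⁻¹ *
      (volume (ball c R) ^ (n : ℝ)⁻¹ + edist c y) ^ (-((n : ℝ) - β i + δ / (m : ℝ))))
    (conjE (p i))

/-- The left-hand side of the `H_m(p,β,δ̃)` condition over the ball `B(c,R)`. -/
noncomputable def HmLHS (n m : ℕ) (δ δt : ℝ) (β : Fin m → ℝ) (p : Fin m → ℝ≥0∞)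
    (w : Rn n → ℝ≥0∞) (v : Fin m → Rn n → ℝ≥0∞) (c : Rn n) (R : ℝ) : ℝ≥0∞ :=
  essSup w (volume.restrict (ball c R)) / volume (ball c R) ^ ((δt - δ) / (n : ℝ)) *
    ∏ i, HmFactor n m δ β p v c R i

/-- The class `H_m(p,β,δ̃)`, with fixed ambient parameter `δ` and splitting `β i`. -/
def MemHm (n m : ℕ) (δ δt : ℝ) (β : Fin m → ℝ) (p : Fin m → ℝ≥0∞)
    (w : Rn n → ℝ≥0∞) (v : Fin m → Rn n → ℝ≥0∞) : Prop :=
  ∃ C : ℝ≥0∞, C ≠ ∞ ∧ ∀ (c : Rn n) (R : ℝ), 0 < R → HmLHS n m δ δt β p w v c R ≤ C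

/-- The reverse Hölder class `RH_s`. -/
def MemRH (n : ℕ) (s : ℝ) (u : Rn n → ℝ≥0∞) : Prop :=
  ∃ C : ℝ≥0∞, C ≠ ∞ ∧ ∀ (c : Rn n) (R : ℝ), 0 < R →
    ((volume (ball c R))⁻¹ * ∫⁻ x in ball c R, u x ^ s) ^ s⁻¹ ≤
      C * ((volume (ball c R))⁻¹ * ∫⁻ x in ball c R, u x)

/-- The reverse Hölder class `RH_∞`. -/
def MemRHinf (n : ℕ) (u : Rn n → ℝ≥0∞) : Prop :=
  ∃ C : ℝ≥0∞, C ≠ ∞ ∧ ∀ (c : Rn n) (R : ℝ), 0 < R →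
    essSup u (volume.restrict (ball c R)) ≤
      C * ((volume (ball c R))⁻¹ * ∫⁻ x in ball c R, u x)

/-- The Muckenhoupt class `A_1`. -/
def MemA1 (n : ℕ) (u : Rn n → ℝ≥0∞) : Prop :=
  ∃ C : ℝ≥0∞, C ≠ ∞ ∧ ∀ (c : Rn n) (R : ℝ), 0 < R →
    (volume (ball c R))⁻¹ * ∫⁻ x in ball c R, u x ≤
      C * essInf u (volume.restrict (ball c R))

/-- A doubling function: the integral over `2B` is controlled by the one over `B`. -/
def Doubling (n : ℕ) (u : Rn n → ℝ≥0∞) : Prop :=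
  ∃ C : ℝ≥0∞, C ≠ ∞ ∧ ∀ (c : Rn n) (R : ℝ), 0 < R →
    ∫⁻ x in ball c (2 * R), u x ≤ C * ∫⁻ x in ball c R, u x

/-- The `i`-th factor in the global condition over the ball `B(c,R)`. -/
noncomputable def GlobalFactor (n m : ℕ) (δ : ℝ) (β : Fin m → ℝ) (p : Fin m → ℝ≥0∞)
    (v : Fin m → Rn n → ℝ≥0∞) (c : Rn n) (R : ℝ) (i : Fin m) : ℝ≥0∞ :=
  LpNormE (volume.restrict (ball c R)ᶜ)
    (fun y => (v i y)⁻¹ * edist c y ^ (-((n : ℝ) - β i + δ / (m : ℝ)))) (conjE (p i))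

/-- The global condition associated with the class `H_m(p,β,δ̃)`. -/
def GlobalCond (n m : ℕ) (δ δt : ℝ) (β : Fin m → ℝ) (p : Fin m → ℝ≥0∞)
    (w : Rn n → ℝ≥0∞) (v : Fin m → Rn n → ℝ≥0∞) : Prop :=
  ∃ C : ℝ≥0∞, C ≠ ∞ ∧ ∀ (c : Rn n) (R : ℝ), 0 < R →
    essSup w (volume.restrict (ball c R)) / volume (ball c R) ^ ((δt - δ) / (n : ℝ)) *
      ∏ i, GlobalFactor n m δ β p v c R i ≤ C

/-- The local condition associated with the class `H_m(p,β,δ̃)`; here `β` is the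
total (scalar) parameter. -/
def LocalCond (n m : ℕ) (δt β : ℝ) (p : Fin m → ℝ≥0∞)
    (w : Rn n → ℝ≥0∞) (v : Fin m → Rn n → ℝ≥0∞) : Prop :=
  ∃ C : ℝ≥0∞, C ≠ ∞ ∧ ∀ (c : Rn n) (R : ℝ), 0 < R →
    essSup w (volume.restrict (ball c R)) /
        volume (ball c R) ^ (δt / (n : ℝ) + (∑ i, (p i)⁻¹).toReal - β / (n : ℝ)) *
      ∏ i, (if p i = 1 then essSup (fun x => (v i x)⁻¹) (volume.restrict (ball c R))
        else ((volume (ball c R))⁻¹ * ∫⁻ x in ball c R, (v i x)⁻¹ ^ conjR (p i)) ^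
          (conjR (p i))⁻¹) ≤ C

/-- The multilinear class `A_{p⃗,∞}`. -/
def MemApInf (n m : ℕ) (p : Fin m → ℝ≥0∞) (v : Fin m → Rn n → ℝ≥0∞) : Prop :=
  ∃ C : ℝ≥0∞, C ≠ ∞ ∧ ∀ (c : Rn n) (R : ℝ), 0 < R →
    essSup (fun x => ∏ i, v i x) (volume.restrict (ball c R)) *
      ∏ i, (if p i = 1 then essSup (fun x => (v i x)⁻¹) (volume.restrict (ball c R))
        else ((volume (ball c R))⁻¹ * ∫⁻ x in ball c R, (v i x)⁻¹ ^ conjR (p i)) ^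
          (conjR (p i))⁻¹) ≤ C

/-- The multilinear class `A_{p⃗,q}` for `0 < q < ∞`. -/
def MemApq (n m : ℕ) (p : Fin m → ℝ≥0∞) (q : ℝ) (w : Fin m → Rn n → ℝ≥0∞) : Prop :=
  ∃ C : ℝ≥0∞, C ≠ ∞ ∧ ∀ (c : Rn n) (R : ℝ), 0 < R →
    ((volume (ball c R))⁻¹ * ∫⁻ x in ball c R, ∏ i, w i x ^ q) ^ (1 / q) *
      ∏ i, (if p i = 1 then essSup (fun x => (w i x)⁻¹) (volume.restrict (ball c R))
        else ((volume (ball c R))⁻¹ * ∫⁻ x in ball c R, (w i x)⁻¹ ^ conjR (p i)) ^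
          (conjR (p i))⁻¹) ≤ C

/-- The multilinear Muckenhoupt class `A_{r⃗}`. -/
def MemAvec (n m : ℕ) (r : Fin m → ℝ≥0∞) (u : Fin m → Rn n → ℝ≥0∞) : Prop :=
  ∃ C : ℝ≥0∞, C ≠ ∞ ∧ ∀ (c : Rn n) (R : ℝ), 0 < R →
    ((volume (ball c R))⁻¹ *
        ∫⁻ x in ball c R, ∏ i, u i x ^ ((∑ j, (r j)⁻¹).toReal⁻¹ * ((r i)⁻¹).toReal)) ^
        (∑ j, (r j)⁻¹).toReal *
      ∏ i, (if r i = 1 then essSup (fun x => (u i x)⁻¹) (volume.restrict (ball c R))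
        else ((volume (ball c R))⁻¹ * ∫⁻ x in ball c R, u i x ^ (1 - conjR (r i))) ^
          (conjR (r i))⁻¹) ≤ C

/-- Product Lebesgue measure on `(ℝⁿ)^m`. -/
noncomputable def pim (n m : ℕ) : Measure (Fin m → Rn n) :=
  Measure.pi fun _ => (volume : Measure (Rn n))

/-- Size condition for a multilinear fractional kernel of order `α`. -/
def SizeCond (n m : ℕ) (α : ℝ) (K : Rn n → (Fin m → Rn n) → ℝ) : Prop :=
  ∃ C : ℝ, 0 < C ∧ ∀ (x : Rn n) (y : Fin m → Rn n), (∑ i, dist x (y i)) ≠ 0 →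
    |K x y| ≤ C * (∑ i, dist x (y i)) ^ (α - (m : ℝ) * (n : ℝ))

/-- Smoothness condition with exponent `γ` for a multilinear fractional kernel. -/
def SmoothCond (n m : ℕ) (α γ : ℝ) (K : Rn n → (Fin m → Rn n) → ℝ) : Prop :=
  ∃ C : ℝ, 0 < C ∧ ∀ (x x' : Rn n) (y : Fin m → Rn n),
    2 * dist x x' < ∑ i, dist x (y i) →
    |K x y - K x' y| ≤ C * dist x x' ^ γ * (∑ i, dist x (y i)) ^ (α - (m : ℝ) * (n : ℝ) - γ)

/-- The Lipschitz space `Λ(δ)`. -/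
def MemLip (n : ℕ) (δ : ℝ) (b : Rn n → ℝ) : Prop :=
  ∃ C : ℝ, 0 ≤ C ∧ ∀ x y : Rn n, |b x - b y| ≤ C * dist x y ^ δ

/-- The multilinear integral operator with kernel `K`. -/
noncomputable def TOp (n m : ℕ) (K : Rn n → (Fin m → Rn n) → ℝ)
    (f : Fin m → Rn n → ℝ) (x : Rn n) : ℝ :=
  ∫ y, K x y * ∏ i, f i (y i) ∂pim n m

/-- The sum-type multilinear commutator `T_{α,b}`. -/
noncomputable def TSumComm (n m : ℕ) (K : Rn n → (Fin m → Rn n) → ℝ)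
    (b : Fin m → Rn n → ℝ) (f : Fin m → Rn n → ℝ) (x : Rn n) : ℝ :=
  ∑ j, ∫ y, (b j x - b j (y j)) * K x y * ∏ i, f i (y i) ∂pim n m

/-- The product-type multilinear commutator `𝒯_{α,b}` (integral representation). -/
noncomputable def TProdComm (n m : ℕ) (K : Rn n → (Fin m → Rn n) → ℝ)
    (b : Fin m → Rn n → ℝ) (f : Fin m → Rn n → ℝ) (x : Rn n) : ℝ :=
  ∫ y, K x y * ∏ i, (b i x - b i (y i)) * f i (y i) ∂pim n m

/-- `‖f · v‖_q` for a real function `f` and a weight `v`. -/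
noncomputable def wLpNorm (n : ℕ) (f : Rn n → ℝ) (v : Rn n → ℝ≥0∞) (q : ℝ≥0∞) : ℝ≥0∞ :=
  LpNormE volume (fun x => ENNReal.ofReal |f x| * v x) q

/-- The (nonnegative) multilinear fractional integral `I_{a,m}`. -/
noncomputable def IfracE (n m : ℕ) (a : ℝ) (g : Fin m → Rn n → ℝ≥0∞) (x : Rn n) : ℝ≥0∞ :=
  ∫⁻ y, (∑ i, edist x (y i)) ^ (a - (m : ℝ) * (n : ℝ)) * ∏ i, g i (y i) ∂pim n m

/-- Commuting with `b` in the `j`-th entry. -/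
noncomputable def commAt (n m : ℕ) (T : (Fin m → Rn n → ℝ) → Rn n → ℝ)
    (g : Rn n → ℝ) (j : Fin m) (f : Fin m → Rn n → ℝ) (x : Rn n) : ℝ :=
  g x * T f x - T (Function.update f j fun z => g z * f j z) x

/-- The iterated commutator `[b_k, … [b_2, [b_1, T]_1]_2 … ]_k`. -/
noncomputable def iterComm (n m : ℕ) (T : (Fin m → Rn n → ℝ) → Rn n → ℝ)
    (b : Fin m → Rn n → ℝ) : ℕ → (Fin m → Rn n → ℝ) → Rn n → ℝ
  | 0 => T
  | k + 1 => fun f x =>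
      if h : k < m then commAt n m (iterComm n m T b k) (b ⟨k, h⟩) ⟨k, h⟩ f x
      else iterComm n m T b k f x

end

/-! ### Product measures and singular kernels on balls -/

/-- Tonelli for a product of functions of separate variables. -/
theorem lintegral_pi_prod {E : Type*} [MeasurableSpace E] (m : ℕ) (μ : Measure E) [SigmaFinite μ]
    (g : Fin m → E → ℝ≥0∞) (hg : ∀ i, Measurable (g i)) :
    ∫⁻ y, ∏ i, g i (y i) ∂(Measure.pi fun _ : Fin m => μ) = ∏ i, ∫⁻ t, g i t ∂μ := by
  induction m with
  | zero => simp
  | succ k ih =>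
    have h := ((measurePreserving_piFinSuccAbove (fun _ : Fin (k+1) => μ) 0).symm)
    rw [h.lintegral_map_equiv]
    simp_rw [MeasurableEquiv.piFinSuccAbove_symm_apply, Fin.insertNthEquiv,
        Fin.prod_univ_succ]
    simp only [Equiv.coe_fn_mk, Fin.insertNth_zero, Fin.cons_zero, Fin.cons_succ]
    have := lintegral_prod_mul (μ := μ) (ν := Measure.pi fun _ : Fin k => μ)
      (f := g 0) (g := fun y : Fin k → E => ∏ i, g (Fin.succ i) (y i)) (hg 0).aemeasurable
      (Finset.measurable_prod _ fun i _ => (hg _).comp (measurable_pi_apply i)).aemeasurable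
    rw [ih _ (fun i => hg _)] at this
    exact this

theorem lintegral_restrict_pi_prod (n m : ℕ) (A : Set (Rn n))
    (g : Fin m → Rn n → ℝ≥0∞) (hg : ∀ i, Measurable (g i)) :
    ∫⁻ y in Set.univ.pi fun _ => A, ∏ i, g i (y i) ∂(pim n m) =
      ∏ i, ∫⁻ t in A, g i t := by
  unfold pim
  rw [Measure.restrict_pi_pi, lintegral_pi_prod _ _ _ hg]

/-- Jensen's inequality for the power `m` and the measure with (unnormalized) density `φ`. -/
theorem jensen_lintegral {X : Type*} [MeasurableSpace X] {μ : Measure X} {φ ψ : X → ℝ≥0∞}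
    (hφ : AEMeasurable φ μ) (hψ : AEMeasurable ψ μ) {m : ℕ} (hm : 1 ≤ m) :
    (∫⁻ x, φ x * ψ x ∂μ) ^ (m : ℝ) ≤ (∫⁻ x, φ x ∂μ) ^ ((m : ℝ) - 1) * ∫⁻ x, φ x * ψ x ^ (m : ℝ) ∂μ := by
  have hm0 : (0 : ℝ) < m := by exact_mod_cast hm
  have hm1 : (1 : ℝ) ≤ m := by exact_mod_cast hm
  have hinv : (m : ℝ)⁻¹ ≤ 1 := inv_le_one_of_one_le₀ hm1
  have h := ENNReal.lintegral_mul_norm_pow_le (μ := μ) hφ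
    (hφ.mul (hψ.pow_const (m : ℝ))) (p := 1 - (m : ℝ)⁻¹) (q := (m : ℝ)⁻¹) (by linarith) (by positivity) (by ring)
  have e : ∀ x, φ x ^ (1 - (m : ℝ)⁻¹) * ((φ * fun a => ψ a ^ (m : ℝ)) x) ^ (m : ℝ)⁻¹ = φ x * ψ x := by
    intro x
    simp only [Pi.mul_apply]
    rw [ENNReal.mul_rpow_of_nonneg _ _ (by positivity), ENNReal.rpow_rpow_inv hm0.ne', ← mul_assoc,
      ← ENNReal.rpow_add_of_nonneg _ _ (by linarith) (by positivity)]
    simp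
  simp_rw [e] at h
  calc _ ≤ _ := ENNReal.rpow_le_rpow h hm0.le
    _ = _ := by
      rw [ENNReal.mul_rpow_of_nonneg _ _ hm0.le, ENNReal.rpow_inv_rpow hm0.ne', ← ENNReal.rpow_mul]
      congr 2
      field_simp

theorem vol_ball_eq {n : ℕ} (c : Rn n) {R : ℝ} (hR : 0 < R) :
    volume (ball c R) = ENNReal.ofReal R ^ (n : ℝ) * volume (ball (0 : Rn n) 1) := by
  rw [Measure.addHaar_ball_of_pos _ _ hR, finrank_euclideanSpace_fin, ENNReal.rpow_natCast,
    ENNReal.ofReal_pow hR.le]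

theorem sing_ball_one {n : ℕ} (hn : 1 ≤ n) {σ : ℝ} (hσ : σ < n) :
    ∫⁻ z in ball (0 : Rn n) 1, ‖z‖ₑ ^ (-σ) < ∞ := by
  have : Nonempty (Fin n) := ⟨⟨0, hn⟩⟩
  have hd : Module.finrank ℝ (Rn n) = n := finrank_euclideanSpace_fin
  have h : IntegrableOn (fun z : Rn n => ‖z‖ ^ (-σ)) (ball 0 1) volume := by
    apply integrableOn_ball_of_norm_le_rpow (by rw [hd]; exact hn) (C := 1) (α := σ) (by rw [hd]; exact hσ)
    · refine Filter.Eventually.of_forall fun z => ?_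
      rw [Real.norm_of_nonneg (by positivity), one_mul]
    · exact (by fun_prop : Measurable fun z : Rn n => ‖z‖ ^ (-σ)).aestronglyMeasurable
  have h2 := h.2
  rw [hasFiniteIntegral_iff_enorm] at h2
  refine lt_of_le_of_lt (lintegral_mono_ae ?_) h2
  have : ∀ᵐ z : Rn n ∂volume.restrict (ball 0 1), z ≠ 0 := by
    apply ae_restrict_of_ae
    exact Measure.ae_ne volume 0
  filter_upwards [this] with z hz
  rw [Real.enorm_of_nonneg (by positivity), ← ENNReal.ofReal_rpow_of_pos (by positivity), ofReal_norm]

/-- The constant is the integral of `|z|^{-σ}` over the unit ball; the general case follows by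
translation and dilation. -/
theorem sing_ball {n : ℕ} (hn : 1 ≤ n) {σ : ℝ} (hσ : σ < n) :
    ∃ C : ℝ≥0∞, C ≠ ∞ ∧ ∀ (x : Rn n) (R : ℝ), 0 < R →
      ∫⁻ y in ball x R, edist x y ^ (-σ) ≤ C * ENNReal.ofReal R ^ ((n : ℝ) - σ) := by
  refine ⟨_, (sing_ball_one hn hσ).ne, fun x R hR => le_of_eq ?_⟩
  have hr0 : ENNReal.ofReal R ≠ 0 := by simpa using hR
  rw [← lintegral_indicator measurableSet_ball, ← lintegral_add_left_eq_self _ x]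
  have hmap := Measure.map_addHaar_smul (volume : Measure (Rn n)) hR.ne'
  have hmeas : Measurable fun z : Rn n => (ball x R).indicator (fun y => edist x y ^ (-σ)) (x + z) := by
    apply Measurable.comp (g := (ball x R).indicator (fun y => edist x y ^ (-σ)))
    · exact Measurable.indicator (by fun_prop) measurableSet_ball
    · fun_prop
  have h3 : ∫⁻ z : Rn n, (ball x R).indicator (fun y => edist x y ^ (-σ)) (x + z) ∂(Measure.map (fun z : Rn n => R • z) volume)
      = ∫⁻ z : Rn n, (ball x R).indicator (fun y => edist x y ^ (-σ)) (x + R • z) :=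
    lintegral_map hmeas (by fun_prop)
  rw [hmap, lintegral_smul_measure, finrank_euclideanSpace_fin] at h3
  have h4 : ∀ z : Rn n, (ball x R).indicator (fun y => edist x y ^ (-σ)) (x + R • z)
     = ENNReal.ofReal R ^ (-σ) * (ball (0 : Rn n) 1).indicator (fun z => ‖z‖ₑ ^ (-σ)) z := by
    intro z
    have hm : x + R • z ∈ ball x R ↔ z ∈ ball (0 : Rn n) 1 := by
      simp [mem_ball, norm_smul, abs_of_pos hR, hR]
    by_cases hz : z ∈ ball (0 : Rn n) 1
    · rw [indicator_of_mem (hm.2 hz), indicator_of_mem hz]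
      have : edist x (x + R • z) = ENNReal.ofReal R * ‖z‖ₑ := by
        simp [edist_eq_enorm_sub, enorm_smul, Real.enorm_of_nonneg hR.le]
      rw [this, ENNReal.mul_rpow_of_ne_top ENNReal.ofReal_ne_top (by simp)]
    · rw [indicator_of_notMem (fun h => hz (hm.1 h)), indicator_of_notMem hz, mul_zero]
  simp_rw [h4] at h3
  rw [lintegral_const_mul' _ _ (by simp [hR]), lintegral_indicator measurableSet_ball] at h3
  have e1 : ENNReal.ofReal |(R ^ n)⁻¹| = (ENNReal.ofReal R ^ (n : ℝ))⁻¹ := by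
    rw [abs_of_pos (by positivity), ENNReal.ofReal_inv_of_pos (by positivity), ENNReal.rpow_natCast, ENNReal.ofReal_pow hR.le]
  rw [e1, smul_eq_mul] at h3
  have hne : ENNReal.ofReal R ^ (n : ℝ) ≠ 0 := by simp [hR]
  have hnt : ENNReal.ofReal R ^ (n : ℝ) ≠ ∞ := by simp
  rw [sub_eq_add_neg, ENNReal.rpow_add _ _ hr0 (by simp), mul_comm, mul_assoc, ← h3, ← mul_assoc, ENNReal.mul_inv_cancel hne hnt, one_mul]

/-- The singular integral over `B(c,R)` or `B(c,2R)` with a pole inside the other ball, obtained by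
enlarging the domain to a ball of radius `3R` centred at the pole. -/
theorem sing_balls {n : ℕ} (hn : 1 ≤ n) {σ : ℝ} (hσ : σ < n) :
    ∃ C : ℝ≥0∞, C ≠ ∞ ∧ ∀ (c : Rn n) (R : ℝ), 0 < R →
      (∀ y ∈ ball c (2 * R),
        ∫⁻ x in ball c R, edist x y ^ (-σ) ≤ C * ENNReal.ofReal R ^ ((n : ℝ) - σ)) ∧
      ∀ x ∈ ball c R,
        ∫⁻ y in ball c (2 * R), edist x y ^ (-σ) ≤ C * ENNReal.ofReal R ^ ((n : ℝ) - σ) := by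
  obtain ⟨C, hC, h⟩ := sing_ball hn hσ
  have key : ∀ R : ℝ, 0 < R → C * ENNReal.ofReal (3 * R) ^ ((n : ℝ) - σ) =
      C * ENNReal.ofReal 3 ^ ((n : ℝ) - σ) * ENNReal.ofReal R ^ ((n : ℝ) - σ) := by
    intro R hR
    rw [ENNReal.ofReal_mul (by norm_num), ENNReal.mul_rpow_of_ne_top (by simp) (by simp), mul_assoc]
  refine ⟨C * ENNReal.ofReal 3 ^ ((n : ℝ) - σ), ENNReal.mul_ne_top hC (by simp),
    fun c R hR => ⟨fun y hy => ?_, fun x hx => ?_⟩⟩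
  · rw [← key R hR]
    refine le_trans ?_ (h y (3 * R) (by positivity))
    simp_rw [edist_comm _ y]
    refine lintegral_mono_set (ball_subset_ball' ?_)
    rw [mem_ball, dist_comm] at hy
    linarith
  · rw [← key R hR]
    refine le_trans ?_ (h x (3 * R) (by positivity))
    refine lintegral_mono_set (ball_subset_ball' ?_)
    rw [mem_ball, dist_comm] at hx
    linarith

/-- `L^1 → L^m` bound for the fractional kernel, valid when `σ m < n`: Jensen's inequality with
density `H`, then Tonelli. -/
theorem kernel_first {n m : ℕ} (hn : 1 ≤ n) (hm : 1 ≤ m) {σ : ℝ} (hσ : σ * m < n) :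
    ∃ C : ℝ≥0∞, C ≠ ∞ ∧ ∀ (c : Rn n) (R : ℝ), 0 < R → ∀ H : Rn n → ℝ≥0∞, Measurable H →
      ∫⁻ x in ball c R, (∫⁻ y in ball c (2 * R), H y * edist x y ^ (-σ)) ^ (m : ℝ) ≤
        C * ENNReal.ofReal R ^ ((n : ℝ) - σ * m) * (∫⁻ y in ball c (2 * R), H y) ^ (m : ℝ) := by
  obtain ⟨C, hC, h⟩ := sing_balls hn hσ
  have hm1 : (1 : ℝ) ≤ m := by exact_mod_cast hm
  refine ⟨C, hC, fun c R hR H hH => ?_⟩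
  set N := ∫⁻ y in ball c (2 * R), H y
  calc _ ≤ ∫⁻ x in ball c R, N ^ ((m : ℝ) - 1) *
        ∫⁻ y in ball c (2 * R), H y * edist x y ^ (-(σ * m)) := by
        refine lintegral_mono fun x => ?_
        refine (jensen_lintegral hH.aemeasurable (by fun_prop) hm).trans (le_of_eq ?_)
        simp_rw [← ENNReal.rpow_mul, neg_mul]
        rfl
    _ = N ^ ((m : ℝ) - 1) * ∫⁻ y in ball c (2 * R), H y *
          ∫⁻ x in ball c R, edist x y ^ (-(σ * m)) := by
        rw [lintegral_const_mul, lintegral_lintegral_swap]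
        · congr 1
          refine lintegral_congr fun y => ?_
          rw [lintegral_const_mul]
          fun_prop
        · apply Measurable.aemeasurable
          simp only [Function.uncurry_def]
          fun_prop
        · apply Measurable.lintegral_prod_right'
            (f := fun q : Rn n × Rn n => H q.2 * edist q.1 q.2 ^ (-(σ * m)))
          fun_prop
    _ ≤ N ^ ((m : ℝ) - 1) * ∫⁻ y in ball c (2 * R), H y *
          (C * ENNReal.ofReal R ^ ((n : ℝ) - σ * m)) := by
        gcongr N ^ ((m : ℝ) - 1) * ?_
        refine setLIntegral_mono (by fun_prop) fun y hy => ?_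
        gcongr
        exact (h c R hR).1 y hy
    _ = _ := by
        rw [lintegral_mul_const _ hH]
        change N ^ ((m : ℝ) - 1) * (N * _) = _
        rw [← mul_assoc, mul_comm]
        congr 1
        nth_rewrite 2 [← ENNReal.rpow_one N]
        rw [← ENNReal.rpow_add_of_nonneg _ _ (by linarith) (by norm_num)]
        congr 1
        ring

/-- `L^m → L^m` bound for the fractional kernel, valid when `σ < n`: Jensen's inequality with the
kernel as density, then Tonelli. -/
theorem kernel_second {n m : ℕ} (hn : 1 ≤ n) (hm : 1 ≤ m) {σ : ℝ} (hσ : σ < n) :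
    ∃ C : ℝ≥0∞, C ≠ ∞ ∧ ∀ (c : Rn n) (R : ℝ), 0 < R → ∀ U : Rn n → ℝ≥0∞, Measurable U →
      ∫⁻ x in ball c R, (∫⁻ y in ball c (2 * R), edist x y ^ (-σ) * U y) ^ (m : ℝ) ≤
        C * ENNReal.ofReal R ^ (((n : ℝ) - σ) * m) *
          ∫⁻ y in ball c (2 * R), U y ^ (m : ℝ) := by
  obtain ⟨C, hC, h⟩ := sing_balls hn hσ
  have hm1 : (1 : ℝ) ≤ m := by exact_mod_cast hm
  refine ⟨C ^ (m : ℝ), by simp [hC], fun c R hR U hU => ?_⟩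
  set J := C * ENNReal.ofReal R ^ ((n : ℝ) - σ) with hJ
  calc _ ≤ ∫⁻ x in ball c R, J ^ ((m : ℝ) - 1) *
        ∫⁻ y in ball c (2 * R), edist x y ^ (-σ) * U y ^ (m : ℝ) := by
        refine setLIntegral_mono' measurableSet_ball fun x hx => ?_
        refine (jensen_lintegral (by fun_prop) hU.aemeasurable hm).trans ?_
        gcongr
        exact (h c R hR).2 x hx
    _ = J ^ ((m : ℝ) - 1) * ∫⁻ y in ball c (2 * R), U y ^ (m : ℝ) *
          ∫⁻ x in ball c R, edist x y ^ (-σ) := by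
        rw [lintegral_const_mul, lintegral_lintegral_swap]
        · congr 1
          refine lintegral_congr fun y => ?_
          rw [lintegral_mul_const, mul_comm]
          fun_prop
        · apply Measurable.aemeasurable
          simp only [Function.uncurry_def]
          fun_prop
        · apply Measurable.lintegral_prod_right'
            (f := fun q : Rn n × Rn n => edist q.1 q.2 ^ (-σ) * U q.2 ^ (m : ℝ))
          fun_prop
    _ ≤ J ^ ((m : ℝ) - 1) * ∫⁻ y in ball c (2 * R), U y ^ (m : ℝ) * J := by
        gcongr J ^ ((m : ℝ) - 1) * ?_
        refine setLIntegral_mono (by fun_prop) fun y hy => ?_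
        gcongr
        exact (h c R hR).1 y hy
    _ = _ := by
        rw [lintegral_mul_const _ (by fun_prop), mul_comm (∫⁻ _ in _, _), ← mul_assoc]
        congr 1
        nth_rewrite 2 [← ENNReal.rpow_one J]
        rw [← ENNReal.rpow_add_of_nonneg _ _ (by linarith) (by norm_num), sub_add_cancel, hJ,
          ENNReal.mul_rpow_of_nonneg _ _ (by linarith), ← ENNReal.rpow_mul]

/-- The reverse Hölder inequality on `B(c,2R)`, with the powers of the volume written as powers
of `R`. -/
theorem rh_bound {n m : ℕ} (hm : 1 ≤ m) (U : Rn n → ℝ≥0∞) (hU : MemRH n (m : ℝ) U) :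
    ∃ C : ℝ≥0∞, C ≠ ∞ ∧ ∀ (c : Rn n) (R : ℝ), 0 < R →
      ∫⁻ x in ball c (2 * R), U x ^ (m : ℝ) ≤
        C * ENNReal.ofReal R ^ ((n : ℝ) * (1 - m)) * (∫⁻ x in ball c (2 * R), U x) ^ (m : ℝ) := by
  obtain ⟨C, hC, h⟩ := hU
  have hm0 : (0 : ℝ) < m := by exact_mod_cast hm
  have hw0 : volume (ball (0 : Rn n) 1) ≠ 0 := (measure_ball_pos _ _ one_pos).ne'
  have hwt : volume (ball (0 : Rn n) 1) ≠ ∞ := measure_ball_lt_top.ne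
  set D : ℝ≥0∞ := (ENNReal.ofReal 2 ^ (n : ℝ) * volume (ball (0 : Rn n) 1)) with hD
  have hD0 : D ≠ 0 := mul_ne_zero (by simp) hw0
  have hDt : D ≠ ∞ := ENNReal.mul_ne_top (by simp) hwt
  refine ⟨C ^ (m : ℝ) * D ^ (1 - (m : ℝ)), ENNReal.mul_ne_top (by simp [hC]) (by simp [hD0, hDt]),
    fun c R hR => ?_⟩
  have h1 := h c (2 * R) (by positivity)
  set V := volume (ball c (2 * R)) with hV
  have hV0 : V ≠ 0 := (measure_ball_pos _ _ (by positivity)).ne'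
  have hVt : V ≠ ∞ := measure_ball_lt_top.ne
  have hVe : V = ENNReal.ofReal R ^ (n : ℝ) * D := by
    rw [hV, vol_ball_eq c (by positivity : 0 < 2 * R), ENNReal.ofReal_mul (by norm_num),
      ENNReal.mul_rpow_of_nonneg _ _ (by positivity), hD]
    ring
  rw [ENNReal.rpow_inv_le_iff hm0, ENNReal.inv_mul_le_iff hV0 hVt] at h1
  refine h1.trans (le_of_eq ?_)
  have e1 : V * (V⁻¹) ^ (m : ℝ) = ENNReal.ofReal R ^ ((n : ℝ) * (1 - m)) * D ^ (1 - (m : ℝ)) := by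
    rw [ENNReal.inv_rpow, ← ENNReal.rpow_neg]
    nth_rewrite 1 [← ENNReal.rpow_one V]
    rw [← ENNReal.rpow_add _ _ hV0 hVt, ← sub_eq_add_neg, hVe,
      ENNReal.mul_rpow_of_ne_top (by simp) hDt, ← ENNReal.rpow_mul]
  rw [ENNReal.mul_rpow_of_nonneg _ _ hm0.le, ENNReal.mul_rpow_of_nonneg _ _ hm0.le]
  calc _ = C ^ (m : ℝ) * (V * V⁻¹ ^ (m : ℝ)) * (∫⁻ x in ball c (2 * R), U x) ^ (m : ℝ) := by ring
    _ = _ := by rw [e1]; ring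

/-! ### Tail norms -/

/-- Hölder's inequality for the pair `p`, `p'`, including the endpoints `p = 1` and `p = ∞`. -/
theorem holder_LpNormE {X : Type*} [MeasurableSpace X] {μ : Measure X} {g k : X → ℝ≥0∞}
    (hg : Measurable g) (hk : Measurable k) {p : ℝ≥0∞} (hp : 1 ≤ p) :
    ∫⁻ x, g x * k x ∂μ ≤ LpNormE μ g p * LpNormE μ k (conjE p) := by
  rcases eq_or_ne p 1 with rfl | hp1
  · simp only [LpNormE, conjE, if_true, ENNReal.one_ne_top, if_false, ENNReal.toReal_one,
      ENNReal.rpow_one, div_one]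
    rw [← lintegral_mul_const _ hg]
    refine lintegral_mono_ae ?_
    filter_upwards [ENNReal.ae_le_essSup (μ := μ) k] with x hx
    gcongr
  rcases eq_or_ne p ∞ with rfl | hpt
  · simp only [LpNormE, conjE, if_true, hp1, ENNReal.one_ne_top, if_false, ENNReal.toReal_one,
      ENNReal.rpow_one, div_one]
    rw [← lintegral_const_mul _ hk]
    refine lintegral_mono_ae ?_
    filter_upwards [ENNReal.ae_le_essSup (μ := μ) g] with x hx
    gcongr
  have hP : 1 < p.toReal := by
    rw [← ENNReal.toReal_one]
    exact (ENNReal.toReal_lt_toReal (by simp) hpt).2 (lt_of_le_of_ne hp (Ne.symm hp1))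
  have hq : 0 ≤ p.toReal / (p.toReal - 1) := div_nonneg (by linarith) (by linarith)
  simp only [LpNormE, conjE, hp1, hpt, if_false, ENNReal.ofReal_ne_top, ENNReal.toReal_ofReal hq]
  exact ENNReal.lintegral_mul_le_Lp_mul_Lq μ ((Real.holderConjugate_iff_eq_conjExponent hP).mpr rfl)
    hg.aemeasurable hk.aemeasurable

/-- The norm in `L^{p'}` of `v⁻¹` against the tail `(|B|^{1/n} + |c - ·|)^{-e}`: the factor of the
`H_m` condition attached to one index, with its decay exponent abstracted to `e`. -/
noncomputable def tailNorm (n : ℕ) (e : ℝ) (p : ℝ≥0∞) (v : Rn n → ℝ≥0∞) (c : Rn n) (R : ℝ) : ℝ≥0∞ :=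
  LpNormE volume
    (fun y => (v y)⁻¹ * (volume (ball c R) ^ (n : ℝ)⁻¹ + edist c y) ^ (-e)) (conjE p)

theorem tail_base_eq {n : ℕ} (hn : 1 ≤ n) (c : Rn n) {R : ℝ} (hR : 0 < R) :
    volume (ball c R) ^ (n : ℝ)⁻¹ =
      ENNReal.ofReal R * volume (ball (0 : Rn n) 1) ^ (n : ℝ)⁻¹ := by
  have hn0 : (n : ℝ) ≠ 0 := by positivity
  rw [vol_ball_eq c hR, ENNReal.mul_rpow_of_nonneg _ _ (by positivity), ENNReal.rpow_rpow_inv hn0]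

theorem unit_ball_root {n : ℕ} : volume (ball (0 : Rn n) 1) ^ (n : ℝ)⁻¹ ≠ 0 ∧
    volume (ball (0 : Rn n) 1) ^ (n : ℝ)⁻¹ ≠ ∞ := by
  have hw0 : volume (ball (0 : Rn n) 1) ≠ 0 := (measure_ball_pos _ _ one_pos).ne'
  have hwt : volume (ball (0 : Rn n) 1) ≠ ∞ := measure_ball_lt_top.ne
  constructor
  · simp [hw0, hwt]
  · simp [hw0, hwt]

/-- On the doubled ball the tail power is at least a multiple of `R^{-e}`, so the tail norm controls
the local norm of `v⁻¹`. -/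
theorem tail_lower {n : ℕ} (hn : 1 ≤ n) {e : ℝ} (he : 0 ≤ e) :
    ∃ D : ℝ≥0∞, D ≠ ∞ ∧ ∀ (c : Rn n) (R : ℝ), 0 < R → ∀ y ∈ ball c (2 * R),
      1 ≤ D * ENNReal.ofReal R ^ e *
        (volume (ball c R) ^ (n : ℝ)⁻¹ + edist c y) ^ (-e) := by
  obtain ⟨hw0, hwt⟩ := unit_ball_root (n := n)
  set ω := volume (ball (0 : Rn n) 1) ^ (n : ℝ)⁻¹
  refine ⟨(ω + ENNReal.ofReal 2) ^ e, by simp [hwt], fun c R hR y hy => ?_⟩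
  have hr0 : ENNReal.ofReal R ≠ 0 := by simpa using hR
  rw [tail_base_eq hn c hR, ← ENNReal.mul_rpow_of_nonneg _ _ he]
  set P := ENNReal.ofReal R * ω + edist c y with hP
  have hP0 : P ≠ 0 := by
    intro h
    exact mul_ne_zero hr0 hw0 (add_eq_zero.1 h).1
  have hPt : P ≠ ∞ := ENNReal.add_ne_top.2 ⟨ENNReal.mul_ne_top (by simp) hwt, edist_ne_top _ _⟩
  have hle : P ≤ (ω + ENNReal.ofReal 2) * ENNReal.ofReal R := by
    rw [hP, add_mul, mul_comm, ← ENNReal.ofReal_mul (by norm_num)]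
    gcongr
    rw [edist_dist]
    rw [mem_ball, dist_comm] at hy
    exact ENNReal.ofReal_le_ofReal hy.le
  calc (1 : ℝ≥0∞) = P ^ e * P ^ (-e) := by
        rw [← ENNReal.rpow_add _ _ hP0 hPt, add_neg_cancel, ENNReal.rpow_zero]
    _ ≤ _ := by gcongr

theorem one_lt_toReal {p : ℝ≥0∞} (hp : 1 ≤ p) (hp1 : p ≠ 1) (hpt : p ≠ ∞) : 1 < p.toReal := by
  rw [← ENNReal.toReal_one]
  exact (ENNReal.toReal_lt_toReal (by simp) hpt).2 (lt_of_le_of_ne hp (Ne.symm hp1))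

theorem conjR_ge_one {p : ℝ≥0∞} (hp : 1 ≤ p) (hp1 : p ≠ 1) : 1 ≤ conjR p := by
  unfold conjR
  split_ifs with h
  · rfl
  · have := one_lt_toReal hp hp1 h
    rw [le_div_iff₀ (by linarith)]
    linarith

theorem tailNorm_eq {n : ℕ} {e : ℝ} {p : ℝ≥0∞} (hp : 1 ≤ p) (hp1 : p ≠ 1)
    (v : Rn n → ℝ≥0∞) (c : Rn n) (R : ℝ) :
    tailNorm n e p v c R = (∫⁻ y, ((v y)⁻¹ *
      (volume (ball c R) ^ (n : ℝ)⁻¹ + edist c y) ^ (-e)) ^ conjR p) ^ (conjR p)⁻¹ := by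
  unfold tailNorm conjR conjE LpNormE
  rcases eq_or_ne p ∞ with rfl | hpt
  · simp
  · have := one_lt_toReal hp hp1 hpt
    have hq : 0 ≤ p.toReal / (p.toReal - 1) := div_nonneg (by linarith) (by linarith)
    simp only [hp1, hpt, if_false, ENNReal.ofReal_ne_top, ENNReal.toReal_ofReal hq, one_div]

/-- For `p = 1`, the tail norm bounds `v⁻¹` pointwise almost everywhere on the doubled ball. -/
theorem tail_local_p_one {n : ℕ} (hn : 1 ≤ n) {e : ℝ} (he : 0 ≤ e) :
    ∃ D : ℝ≥0∞, D ≠ ∞ ∧ ∀ (v : Rn n → ℝ≥0∞) (c : Rn n) (R : ℝ), 0 < R →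
      ∀ᵐ y ∂volume.restrict (ball c (2 * R)),
        (v y)⁻¹ ≤ D * ENNReal.ofReal R ^ e * tailNorm n e 1 v c R := by
  obtain ⟨D, hD, h⟩ := tail_lower hn he
  refine ⟨D, hD, fun v c R hR => ?_⟩
  filter_upwards [ae_restrict_mem measurableSet_ball, ae_restrict_of_ae (ENNReal.ae_le_essSup
    (μ := volume) (fun y => (v y)⁻¹ * (volume (ball c R) ^ (n : ℝ)⁻¹ + edist c y) ^ (-e)))]
    with y hy hy2
  have e1 : tailNorm n e 1 v c R = essSup (fun y => (v y)⁻¹ *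
      (volume (ball c R) ^ (n : ℝ)⁻¹ + edist c y) ^ (-e)) volume := by
    simp [tailNorm, conjE, LpNormE]
  rw [e1]
  calc (v y)⁻¹ = (v y)⁻¹ * 1 := by rw [mul_one]
    _ ≤ (v y)⁻¹ * (D * ENNReal.ofReal R ^ e *
        (volume (ball c R) ^ (n : ℝ)⁻¹ + edist c y) ^ (-e)) := by gcongr; exact h c R hR y hy
    _ = D * ENNReal.ofReal R ^ e * ((v y)⁻¹ *
        (volume (ball c R) ^ (n : ℝ)⁻¹ + edist c y) ^ (-e)) := by ring
    _ ≤ _ := by gcongr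

/-- For `1 < p ≤ ∞`, the tail norm bounds the `L^{p'}` norm of `v⁻¹` on the doubled ball. -/
theorem tail_local {n : ℕ} (hn : 1 ≤ n) {e : ℝ} (he : 0 ≤ e) :
    ∃ D : ℝ≥0∞, D ≠ ∞ ∧ ∀ (p : ℝ≥0∞), 1 ≤ p → p ≠ 1 →
      ∀ (v : Rn n → ℝ≥0∞), Measurable v → ∀ (c : Rn n) (R : ℝ), 0 < R →
      (∫⁻ y in ball c (2 * R), (v y)⁻¹ ^ conjR p) ^ (conjR p)⁻¹ ≤
         D * ENNReal.ofReal R ^ e * tailNorm n e p v c R := by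
  obtain ⟨D, hD, h⟩ := tail_lower hn he
  refine ⟨D, hD, fun p hp hp1 v hv c R hR => ?_⟩
  have hq := conjR_ge_one hp hp1
  have hq0 : 0 < conjR p := by linarith
  rw [tailNorm_eq hp hp1]
  rw [ENNReal.rpow_inv_le_iff hq0, ENNReal.mul_rpow_of_nonneg _ _ hq0.le, ENNReal.rpow_inv_rpow hq0.ne',
    ← lintegral_const_mul _ (by fun_prop)]
  refine le_trans ?_ (setLIntegral_le_lintegral (ball c (2 * R)) _)
  refine setLIntegral_mono' measurableSet_ball fun y hy => ?_
  rw [← ENNReal.mul_rpow_of_nonneg _ _ hq0.le]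
  gcongr
  calc (v y)⁻¹ = (v y)⁻¹ * 1 := by rw [mul_one]
    _ ≤ (v y)⁻¹ * (D * ENNReal.ofReal R ^ e *
        (volume (ball c R) ^ (n : ℝ)⁻¹ + edist c y) ^ (-e)) := by gcongr; exact h c R hR y hy
    _ = _ := by ring

/-! ### The one-variable local estimate -/

theorem ennreal_rpow_comm (a : ℝ≥0∞) (s t : ℝ) : (a ^ s) ^ t = (a ^ t) ^ s := by
  rw [← ENNReal.rpow_mul, ← ENNReal.rpow_mul, mul_comm]

/-- Weights are allowed the values `0` and `∞`, but only on null sets, where the cancellation may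
fail. -/
theorem weight_cancel {n : ℕ} {v : Rn n → ℝ≥0∞} (hv : IsWeight n v) (g : Rn n → ℝ≥0∞) :
    ∀ᵐ y ∂(volume : Measure (Rn n)), g y = g y * v y * (v y)⁻¹ := by
  filter_upwards [hv.2.1] with y hy
  rw [mul_assoc, ENNReal.mul_inv_cancel hy.1.ne' hy.2.ne, mul_one]

/-- The case `p = 1`: `v⁻¹` is bounded by the tail norm on the doubled ball and `kernel_first`
applies to `g v`. -/
theorem local_factor_one {n m : ℕ} (hn : 1 ≤ n) (hm : 1 ≤ m) {e κ : ℝ} (he : 0 ≤ e)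
    (hκ : κ * m < n) {v : Rn n → ℝ≥0∞} (hv : IsWeight n v) :
    ∃ C : ℝ≥0∞, C ≠ ∞ ∧ ∀ (c : Rn n) (R : ℝ), 0 < R → ∀ g : Rn n → ℝ≥0∞, Measurable g →
      ∫⁻ x in ball c R, (∫⁻ y in ball c (2 * R), edist x y ^ (-κ) * g y) ^ (m : ℝ) ≤
        C * ENNReal.ofReal R ^ ((n : ℝ) - κ * m + e * m) *
          (LpNormE volume (fun x => g x * v x) 1 * tailNorm n e 1 v c R) ^ (m : ℝ) := by
  obtain ⟨C, hC, h⟩ := kernel_first hn hm hκ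
  obtain ⟨D, hD, h'⟩ := tail_local_p_one hn he
  have hm0 : (0 : ℝ) ≤ m := by positivity
  refine ⟨C * D ^ (m : ℝ), ENNReal.mul_ne_top hC (by simp [hD]), fun c R hR g hg => ?_⟩
  have hr0 : ENNReal.ofReal R ≠ 0 := by simpa using hR
  set T := tailNorm n e 1 v c R
  have hvm := hv.1
  have hN : ∫⁻ y in ball c (2 * R), g y * v y ≤ LpNormE volume (fun x => g x * v x) 1 := by
    simpa [LpNormE] using setLIntegral_le_lintegral _ _
  calc _ ≤ ∫⁻ x in ball c R, (D * ENNReal.ofReal R ^ e * T) ^ (m : ℝ) *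
          (∫⁻ y in ball c (2 * R), (g y * v y) * edist x y ^ (-κ)) ^ (m : ℝ) := by
        refine lintegral_mono fun x => ?_
        rw [← ENNReal.mul_rpow_of_nonneg _ _ hm0, ← lintegral_const_mul _ (by fun_prop)]
        refine ENNReal.rpow_le_rpow ?_ hm0
        refine lintegral_mono_ae ?_
        filter_upwards [h' v c R hR, ae_restrict_of_ae (weight_cancel hv g)] with y hy hy2
        rw [hy2]
        calc _ ≤ edist x y ^ (-κ) * (g y * v y * (D * ENNReal.ofReal R ^ e * T)) := by gcongr
          _ = _ := by
            rw [← hy2]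
            ring
    _ ≤ (D * ENNReal.ofReal R ^ e * T) ^ (m : ℝ) * (C * ENNReal.ofReal R ^ ((n : ℝ) - κ * m) *
          (LpNormE volume (fun x => g x * v x) 1) ^ (m : ℝ)) := by
        have hmeas : Measurable fun x : Rn n =>
            ∫⁻ y in ball c (2 * R), g y * v y * edist x y ^ (-κ) := by
          apply Measurable.lintegral_prod_right'
            (f := fun q : Rn n × Rn n => g q.2 * v q.2 * edist q.1 q.2 ^ (-κ))
          fun_prop
        rw [lintegral_const_mul _ (hmeas.pow_const _)]
        gcongr
        refine (h c R hR (fun y => g y * v y) (hg.mul hvm)).trans ?_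
        gcongr
    _ = _ := by
        rw [ENNReal.mul_rpow_of_nonneg _ _ hm0, ENNReal.mul_rpow_of_nonneg _ _ hm0,
          ENNReal.mul_rpow_of_nonneg _ _ hm0, ENNReal.rpow_add _ _ hr0 (by simp), ENNReal.rpow_mul _ e]
        ring

/-- The case `p = ∞`: `g v` is bounded and `kernel_second` applies to `v⁻¹`, whose `m`-th power is
controlled by the reverse Hölder condition. -/
theorem local_factor_top {n m : ℕ} (hn : 1 ≤ n) (hm : 1 ≤ m) {e κ : ℝ} (he : 0 ≤ e)
    (hκ : κ < n) {v : Rn n → ℝ≥0∞} (hv : IsWeight n v)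
    (hRH : MemRH n (m : ℝ) fun x => (v x)⁻¹ ^ conjR ∞) :
    ∃ C : ℝ≥0∞, C ≠ ∞ ∧ ∀ (c : Rn n) (R : ℝ), 0 < R → ∀ g : Rn n → ℝ≥0∞, Measurable g →
      ∫⁻ x in ball c R, (∫⁻ y in ball c (2 * R), edist x y ^ (-κ) * g y) ^ (m : ℝ) ≤
        C * ENNReal.ofReal R ^ ((n : ℝ) - κ * m + e * m) *
          (LpNormE volume (fun x => g x * v x) ∞ * tailNorm n e ∞ v c R) ^ (m : ℝ) := by
  obtain ⟨C, hC, h⟩ := kernel_second hn hm hκ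
  obtain ⟨D, hD, h'⟩ := tail_local hn he
  obtain ⟨E, hE, h''⟩ := rh_bound hm _ hRH
  have hm0 : (0 : ℝ) ≤ m := by positivity
  refine ⟨C * E * D ^ (m : ℝ), ENNReal.mul_ne_top (ENNReal.mul_ne_top hC hE) (by simp [hD]),
    fun c R hR g hg => ?_⟩
  have hr0 : ENNReal.ofReal R ≠ 0 := by simpa using hR
  have h1 := h' ∞ (by simp) (by simp) v hv.1 c R hR
  set T := tailNorm n e ∞ v c R
  set N := LpNormE volume (fun x => g x * v x) ∞ with hN
  have hNe : N = essSup (fun x => g x * v x) volume := by simp [hN, LpNormE]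
  have hvm := hv.1
  have hc1 : conjR ∞ = 1 := by simp [conjR]
  simp only [hc1, ENNReal.rpow_one, inv_one] at h1 h''
  calc _ ≤ ∫⁻ x in ball c R, N ^ (m : ℝ) *
          (∫⁻ y in ball c (2 * R), edist x y ^ (-κ) * (v y)⁻¹) ^ (m : ℝ) := by
        refine lintegral_mono fun x => ?_
        rw [← ENNReal.mul_rpow_of_nonneg _ _ hm0, ← lintegral_const_mul _ (by fun_prop)]
        refine ENNReal.rpow_le_rpow ?_ hm0
        refine lintegral_mono_ae ?_
        filter_upwards [ae_restrict_of_ae (ENNReal.ae_le_essSup (μ := volume) (fun x => g x * v x)),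
          ae_restrict_of_ae (weight_cancel hv g)] with y hy hy2
        rw [hy2, hNe]
        calc _ ≤ edist x y ^ (-κ) * (essSup (fun x => g x * v x) volume * (v y)⁻¹) := by gcongr
          _ = _ := by ring
    _ ≤ N ^ (m : ℝ) * (C * ENNReal.ofReal R ^ (((n : ℝ) - κ) * m) *
          (E * ENNReal.ofReal R ^ ((n : ℝ) * (1 - m)) * (D * ENNReal.ofReal R ^ e * T) ^ (m : ℝ))) := by
        have hmeas : Measurable fun x : Rn n =>
            ∫⁻ y in ball c (2 * R), edist x y ^ (-κ) * (v y)⁻¹ := by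
          apply Measurable.lintegral_prod_right'
            (f := fun q : Rn n × Rn n => edist q.1 q.2 ^ (-κ) * (v q.2)⁻¹)
          fun_prop
        rw [lintegral_const_mul _ (hmeas.pow_const _)]
        gcongr
        refine (h c R hR _ hvm.inv).trans ?_
        gcongr
        refine (h'' c R hR).trans ?_
        gcongr
    _ = _ := by
        rw [ENNReal.mul_rpow_of_nonneg _ _ hm0, ENNReal.mul_rpow_of_nonneg _ _ hm0,
          ENNReal.mul_rpow_of_nonneg _ _ hm0,
          show (n : ℝ) - κ * m + e * m = ((n : ℝ) - κ) * m + n * (1 - m) + e * m by ring,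
          ENNReal.rpow_add _ _ hr0 (by simp), ENNReal.rpow_add _ _ hr0 (by simp),
          ENNReal.rpow_mul _ e]
        ring

/-- The case `1 < p < ∞`: Hölder's inequality in `y` separates `g v` from `v⁻¹`; the first factor is
handled by `kernel_first`, the second by `kernel_second` and the reverse Hölder condition. -/
theorem local_factor_mid {n m : ℕ} (hn : 1 ≤ n) (hm : 1 ≤ m) {e κ : ℝ} (he : 0 ≤ e)
    {p : ℝ≥0∞} (hp : 1 ≤ p) (hp1 : p ≠ 1) (hpt : p ≠ ∞)
    (hκ : κ < n * (1 - (1 - (m : ℝ)⁻¹) * (p.toReal)⁻¹)) {v : Rn n → ℝ≥0∞} (hv : IsWeight n v)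
    (hRH : MemRH n (m : ℝ) fun x => (v x)⁻¹ ^ conjR p) :
    ∃ C : ℝ≥0∞, C ≠ ∞ ∧ ∀ (c : Rn n) (R : ℝ), 0 < R → ∀ g : Rn n → ℝ≥0∞, Measurable g →
      ∫⁻ x in ball c R, (∫⁻ y in ball c (2 * R), edist x y ^ (-κ) * g y) ^ (m : ℝ) ≤
        C * ENNReal.ofReal R ^ ((n : ℝ) - κ * m + e * m) *
          (LpNormE volume (fun x => g x * v x) p * tailNorm n e p v c R) ^ (m : ℝ) := by
  have hP1 := one_lt_toReal hp hp1 hpt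
  set P := p.toReal with hP
  have hq : conjR p = P / (P - 1) := by simp [conjR, hpt, hP]
  have hPq : P.HolderConjugate (conjR p) := by
    rw [hq]
    exact (Real.holderConjugate_iff_eq_conjExponent hP1).mpr rfl
  set q := conjR p with hqdef
  have hP0 : 0 < P := hPq.pos
  have hq0 : 0 < q := hPq.symm.pos
  have hsum : P⁻¹ + q⁻¹ = 1 := hPq.inv_add_inv_eq_one
  have hm0' : (0 : ℝ) < m := by exact_mod_cast hm
  have hm0 := hm0'.le
  -- The exponent `κ` is shared between the two factors in Hölder's inequality so that both
  -- resulting kernels, raised to the powers `P * m` and `q`, have the exponent `κ / Δ < n`.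
  set Δ : ℝ := q⁻¹ + (m * P)⁻¹ with hΔ
  have hΔ0 : 0 < Δ := by positivity
  have hκΔ : κ / Δ < n := by
    rw [div_lt_iff₀ hΔ0]
    have : Δ = 1 - (1 - (m : ℝ)⁻¹) * P⁻¹ := by
      rw [hΔ, mul_inv]
      linarith
    rw [this]
    exact hκ
  set s1 : ℝ := κ / Δ / (m * P) with hs1
  set s2 : ℝ := κ / Δ / q with hs2
  have hs : s1 + s2 = κ := by
    rw [hs1, hs2, div_eq_mul_inv _ (m * P), div_eq_mul_inv _ q, ← mul_add, add_comm, ← hΔ,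
      div_mul_cancel₀ _ hΔ0.ne']
  have hs1n : s1 * P * m < n := by
    have : s1 * P * m = κ / Δ := by
      rw [hs1]
      field_simp
    rw [this]
    exact hκΔ
  have hs2n : s2 * q < n := by
    rw [hs2, div_mul_cancel₀ _ hq0.ne']
    exact hκΔ
  obtain ⟨C, hC, h1⟩ := kernel_first hn hm hs1n
  obtain ⟨C', hC', h2⟩ := kernel_second hn hm hs2n
  obtain ⟨D, hD, h3⟩ := tail_local hn he
  obtain ⟨E, hE, h4⟩ := rh_bound hm _ hRH
  refine ⟨C ^ P⁻¹ * C' ^ q⁻¹ * E ^ q⁻¹ * D ^ (m : ℝ), ?_, fun c R hR g hg => ?_⟩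
  · refine ENNReal.mul_ne_top (ENNReal.mul_ne_top (ENNReal.mul_ne_top ?_ ?_) ?_) ?_
    all_goals exact ENNReal.rpow_ne_top_of_nonneg (by positivity) (by assumption)
  have hr0 : ENNReal.ofReal R ≠ 0 := by simpa using hR
  have h5 := h3 p hp hp1 v hv.1 c R hR
  have hvm := hv.1
  have h1' := h1 c R hR (fun y => (g y * v y) ^ P) (by fun_prop)
  have h2' := h2 c R hR (fun y => (v y)⁻¹ ^ q) (by fun_prop)
  have h4' := h4 c R hR
  rw [← hqdef] at h5
  set T := tailNorm n e p v c R
  set N := LpNormE volume (fun x => g x * v x) p with hN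
  set r := ENNReal.ofReal R with hr
  have hN' : (∫⁻ y in ball c (2 * R), (g y * v y) ^ P) ^ P⁻¹ ≤ N := by
    rw [hN, LpNormE, if_neg hpt, ← hP, one_div]
    gcongr
    exact Measure.restrict_le_self
  set X : Rn n → ℝ≥0∞ := fun x =>
    ∫⁻ y in ball c (2 * R), (g y * v y) ^ P * edist x y ^ (-(s1 * P)) with hX
  set Y : Rn n → ℝ≥0∞ := fun x =>
    ∫⁻ y in ball c (2 * R), edist x y ^ (-(s2 * q)) * (v y)⁻¹ ^ q with hY
  have hXm : Measurable X := by
    apply Measurable.lintegral_prod_right'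
      (f := fun z : Rn n × Rn n => (g z.2 * v z.2) ^ P * edist z.1 z.2 ^ (-(s1 * P)))
    fun_prop
  have hYm : Measurable Y := by
    apply Measurable.lintegral_prod_right'
      (f := fun z : Rn n × Rn n => edist z.1 z.2 ^ (-(s2 * q)) * (v z.2)⁻¹ ^ q)
    fun_prop
  have hpt1 : ∀ x, (∫⁻ y in ball c (2 * R), edist x y ^ (-κ) * g y) ≤ X x ^ P⁻¹ * Y x ^ q⁻¹ := by
    intro x
    have hH := ENNReal.lintegral_mul_le_Lp_mul_Lq (volume.restrict (ball c (2 * R))) hPq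
      (f := fun y => (g y * v y) * edist x y ^ (-s1)) (g := fun y => edist x y ^ (-s2) * (v y)⁻¹)
      (by fun_prop) (by fun_prop)
    simp only [ENNReal.mul_rpow_of_nonneg _ _ hP0.le, ENNReal.mul_rpow_of_nonneg _ _ hq0.le,
      ← ENNReal.rpow_mul, neg_mul, one_div] at hH
    simp only [hX, hY, ENNReal.mul_rpow_of_nonneg _ _ hP0.le]
    refine le_trans (lintegral_mono_ae ?_) hH
    have : Nonempty (Fin n) := ⟨⟨0, hn⟩⟩
    filter_upwards [ae_restrict_of_ae (weight_cancel hv g),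
      ae_restrict_of_ae (Measure.ae_ne volume x)] with y hy hyx
    simp only [Pi.mul_apply]
    have hx0 : edist x y ≠ 0 := by
      exact fun h => hyx (edist_eq_zero.1 h).symm
    rw [← hs, neg_add, ENNReal.rpow_add _ _ hx0 (edist_ne_top _ _)]
    nth_rewrite 1 [hy]
    exact le_of_eq (by ring)
  calc _ ≤ ∫⁻ x in ball c R, (X x ^ (m : ℝ)) ^ P⁻¹ * (Y x ^ (m : ℝ)) ^ q⁻¹ := by
        refine lintegral_mono fun x => ?_
        refine (ENNReal.rpow_le_rpow (hpt1 x) hm0).trans (le_of_eq ?_)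
        rw [ENNReal.mul_rpow_of_nonneg _ _ hm0, ennreal_rpow_comm (X x), ennreal_rpow_comm (Y x)]
    _ ≤ (∫⁻ x in ball c R, X x ^ (m : ℝ)) ^ P⁻¹ * (∫⁻ x in ball c R, Y x ^ (m : ℝ)) ^ q⁻¹ :=
        ENNReal.lintegral_mul_norm_pow_le (by fun_prop) (by fun_prop) (by positivity)
          (by positivity) hsum
    _ ≤ (C * r ^ ((n : ℝ) - s1 * P * m) *
          (∫⁻ y in ball c (2 * R), (g y * v y) ^ P) ^ (m : ℝ)) ^ P⁻¹ *
        (C' * r ^ (((n : ℝ) - s2 * q) * m) * (E * r ^ ((n : ℝ) * (1 - m)) *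
          (∫⁻ y in ball c (2 * R), (v y)⁻¹ ^ q) ^ (m : ℝ))) ^ q⁻¹ := by
        gcongr
        refine h2'.trans ?_
        gcongr
    _ = C ^ P⁻¹ * C' ^ q⁻¹ * E ^ q⁻¹ * (r ^ (((n : ℝ) - s1 * P * m) * P⁻¹) *
          r ^ ((((n : ℝ) - s2 * q) * m) * q⁻¹) * r ^ (((n : ℝ) * (1 - m)) * q⁻¹)) *
          (((∫⁻ y in ball c (2 * R), (g y * v y) ^ P) ^ P⁻¹) *
          (∫⁻ y in ball c (2 * R), (v y)⁻¹ ^ q) ^ q⁻¹) ^ (m : ℝ) := by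
        have hPi : (0 : ℝ) ≤ P⁻¹ := by positivity
        have hqi : (0 : ℝ) ≤ q⁻¹ := by positivity
        simp only [ENNReal.mul_rpow_of_nonneg _ _ hPi, ENNReal.mul_rpow_of_nonneg _ _ hqi,
          ENNReal.mul_rpow_of_nonneg _ _ hm0]
        rw [ennreal_rpow_comm _ (m : ℝ) P⁻¹, ennreal_rpow_comm _ (m : ℝ) q⁻¹]
        simp only [← ENNReal.rpow_mul]
        ring
    _ ≤ C ^ P⁻¹ * C' ^ q⁻¹ * E ^ q⁻¹ * (r ^ (((n : ℝ) - s1 * P * m) * P⁻¹) *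
          r ^ ((((n : ℝ) - s2 * q) * m) * q⁻¹) * r ^ (((n : ℝ) * (1 - m)) * q⁻¹)) *
          (N * (D * r ^ e * T)) ^ (m : ℝ) := by gcongr
    _ = _ := by
        have hexp : (n : ℝ) - κ * m + e * m = ((n : ℝ) - s1 * P * m) * P⁻¹ +
            (((n : ℝ) - s2 * q) * m) * q⁻¹ + ((n : ℝ) * (1 - m)) * q⁻¹ + e * m := by
          rw [← hs]
          have a1 : ((n : ℝ) - s1 * P * m) * P⁻¹ = n * P⁻¹ - s1 * m := by field_simp
          have a2 : (((n : ℝ) - s2 * q) * m) * q⁻¹ = n * m * q⁻¹ - s2 * m := by field_simp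
          rw [a1, a2]
          linear_combination (-(n : ℝ)) * hsum
        rw [hexp, ENNReal.rpow_add _ _ hr0 (by simp [hr]), ENNReal.rpow_add _ _ hr0 (by simp [hr]),
          ENNReal.rpow_add _ _ hr0 (by simp [hr]), ENNReal.rpow_mul _ e]
        simp only [ENNReal.mul_rpow_of_nonneg _ _ hm0]
        ring

/-- One-variable local estimate: the `L^m(B)` norm of the fractional integral over `2B` of one
function. The reverse Hölder condition of order `m` is what raises the integrability of `v⁻¹`. -/
theorem local_factor {n m : ℕ} (hn : 1 ≤ n) (hm : 1 ≤ m) {e κ : ℝ} (he : 0 ≤ e)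
    {p : ℝ≥0∞} (hp : 1 ≤ p)
    (hκ : κ < n * (1 - (1 - (m : ℝ)⁻¹) * (p⁻¹).toReal)) {v : Rn n → ℝ≥0∞} (hv : IsWeight n v)
    (hRH : 1 < p → MemRH n (m : ℝ) fun x => (v x)⁻¹ ^ conjR p) :
    ∃ C : ℝ≥0∞, C ≠ ∞ ∧ ∀ (c : Rn n) (R : ℝ), 0 < R → ∀ g : Rn n → ℝ≥0∞, Measurable g →
      ∫⁻ x in ball c R, (∫⁻ y in ball c (2 * R), edist x y ^ (-κ) * g y) ^ (m : ℝ) ≤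
        C * ENNReal.ofReal R ^ ((n : ℝ) - κ * m + e * m) *
          (LpNormE volume (fun x => g x * v x) p * tailNorm n e p v c R) ^ (m : ℝ) := by
  have hm0 : (0 : ℝ) < m := by exact_mod_cast hm
  rcases eq_or_ne p 1 with rfl | hp1
  · refine local_factor_one hn hm he ?_ hv
    simp only [inv_one, ENNReal.toReal_one, mul_one, sub_sub_cancel] at hκ
    rwa [← div_eq_mul_inv, lt_div_iff₀ hm0] at hκ
  have hlt : 1 < p := lt_of_le_of_ne hp hp1.symm
  rcases eq_or_ne p ∞ with rfl | hpt
  · refine local_factor_top hn hm he ?_ hv (hRH hlt)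
    simpa using hκ
  · refine local_factor_mid hn hm he hp hp1 hpt ?_ hv (hRH hlt)
    rwa [ENNReal.toReal_inv] at hκ

/-! ### Pointwise bounds for the integrand -/

/-- The integrand of the product-type commutator at the point `x`. -/
noncomputable def commIntegrand (n m : ℕ) (K : Rn n → (Fin m → Rn n) → ℝ)
    (b f : Fin m → Rn n → ℝ) (x : Rn n) (y : Fin m → Rn n) : ℝ :=
  K x y * ∏ i, (b i x - b i (y i)) * f i (y i)

/-- A single Lipschitz constant for all the symbols. -/
theorem uniform_lip {n m : ℕ} {δ : ℝ} {b : Fin m → Rn n → ℝ} (hb : ∀ i, MemLip n δ (b i)) :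
    ∃ L : ℝ, 0 < L ∧ ∀ i x y, |b i x - b i y| ≤ L * dist x y ^ δ := by
  choose C hC h using hb
  refine ⟨∑ i, C i + 1, by have := Finset.sum_nonneg fun i (_ : i ∈ Finset.univ) => hC i; linarith,
    fun i x y => (h i x y).trans ?_⟩
  gcongr
  have := Finset.single_le_sum (fun i (_ : i ∈ Finset.univ) => hC i) (Finset.mem_univ i)
  linarith

/-- A splitting of the total singularity `M` into exponents `κ i`, each strictly below the threshold
that makes the local estimate for the `i`-th factor available. -/
theorem exists_split {n m : ℕ} (hn : 1 ≤ n) (hm : 1 ≤ m) {M a : ℝ} (hM : 0 < M)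
    (hMa : M = m * n - a) {t : Fin m → ℝ} (ht0 : ∀ i, 0 ≤ t i) (ht1 : ∀ i, t i ≤ 1)
    (hsum : ∑ i, t i < a / n) :
    ∃ κ : Fin m → ℝ, (∀ i, 0 ≤ κ i) ∧ (∀ i, κ i < n * (1 - (1 - (m : ℝ)⁻¹) * t i)) ∧
      ∑ i, κ i = M := by
  have hn0 : (0 : ℝ) < n := by exact_mod_cast hn
  have hm0 : (0 : ℝ) < m := by exact_mod_cast hm
  have hmi : 0 < (m : ℝ)⁻¹ := by positivity
  have hmi1 : (m : ℝ)⁻¹ ≤ 1 := inv_le_one_of_one_le₀ (by exact_mod_cast hm)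
  set l : Fin m → ℝ := fun i => n * (1 - (1 - (m : ℝ)⁻¹) * t i) with hl
  have hl0 : ∀ i, 0 < l i := by
    intro i
    apply mul_pos hn0
    nlinarith [ht0 i, ht1 i]
  have hls : ∑ i, l i = m * n - n * (1 - (m : ℝ)⁻¹) * ∑ i, t i := by
    have : ∀ i, l i = n - n * (1 - (m : ℝ)⁻¹) * t i := by
      intro i
      simp only [hl]
      ring
    simp only [this, Finset.sum_sub_distrib, ← Finset.mul_sum]
    simp
  have hMl : M < ∑ i, l i := by
    rw [hls, hMa]
    rw [lt_div_iff₀ hn0] at hsum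
    have : 0 ≤ ∑ i, t i := Finset.sum_nonneg fun i _ => ht0 i
    nlinarith [mul_nonneg (mul_nonneg hn0.le hmi.le) this]
  -- `M` lies below the sum of the thresholds `l i`, so it is shared in proportion to them.
  refine ⟨fun i => l i * (M / ∑ i, l i), fun i => ?_, fun i => ?_, ?_⟩
  · have := hl0 i
    have : 0 < ∑ i, l i := hM.trans hMl
    positivity
  · have h1 : M / ∑ i, l i < 1 := (div_lt_one (hM.trans hMl)).2 hMl
    have := mul_lt_mul_of_pos_left h1 (hl0 i)
    simpa [hl] using this
  · rw [← Finset.sum_mul, mul_div_cancel₀ _ (hM.trans hMl).ne']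

/-- If some `y i` equals `x`, the integrand vanishes. Otherwise the sum of distances dominates each
distance, so the singularity can be distributed over the variables according to `κ`. -/
theorem integrand_size {n m : ℕ} {α δ : ℝ} (hδ : 0 < δ)
    {K : Rn n → (Fin m → Rn n) → ℝ} (hK : SizeCond n m α K)
    {b : Fin m → Rn n → ℝ} (hb : ∀ i, MemLip n δ (b i)) {κ : Fin m → ℝ} (hκ : ∀ i, 0 ≤ κ i)
    (hκs : ∑ i, κ i = m * n - (α + m * δ)) (hm : 1 ≤ m) :
    ∃ C : ℝ≥0∞, C ≠ ∞ ∧ ∀ (f : Fin m → Rn n → ℝ) x y,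
      ‖commIntegrand n m K b f x y‖ₑ ≤ C * ∏ i, edist x (y i) ^ (-κ i) * ‖f i (y i)‖ₑ := by
  obtain ⟨L, hL, hb⟩ := uniform_lip hb
  obtain ⟨CK, hCK, hK⟩ := hK
  refine ⟨ENNReal.ofReal (CK * L ^ m), by simp, fun f x y => ?_⟩
  by_cases h0 : ∃ i, dist x (y i) = 0
  · obtain ⟨i, hi⟩ := h0
    have : commIntegrand n m K b f x y = 0 := by
      unfold commIntegrand
      rw [Finset.prod_eq_zero (Finset.mem_univ i), mul_zero]
      rw [← dist_eq_zero.1 hi, sub_self, zero_mul]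
    simp [this]
  push Not at h0
  have hd : ∀ i, 0 < dist x (y i) := fun i => lt_of_le_of_ne dist_nonneg (h0 i).symm
  set S := ∑ i, dist x (y i) with hS
  have hdS : ∀ i, dist x (y i) ≤ S := fun i =>
    Finset.single_le_sum (fun i _ => dist_nonneg) (Finset.mem_univ i)
  have hS0 : 0 < S := (hd ⟨0, hm⟩).trans_le (hdS _)
  have hK' := hK x y hS0.ne'
  have hSp : S ^ (α - (m : ℝ) * n) ≤ ∏ i, dist x (y i) ^ (-(κ i + δ)) := by
    have : α - (m : ℝ) * n = ∑ i, -(κ i + δ) := by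
      rw [Finset.sum_neg_distrib, Finset.sum_add_distrib, hκs]
      simp
      ring
    rw [this, Real.rpow_sum_of_pos hS0]
    refine Finset.prod_le_prod (fun i _ => by positivity) fun i _ => ?_
    exact Real.rpow_le_rpow_of_nonpos (hd i) (hdS i) (by have := hκ i; linarith)
  have hreal : |commIntegrand n m K b f x y| ≤
      CK * L ^ m * ∏ i, dist x (y i) ^ (-κ i) * |f i (y i)| := by
    unfold commIntegrand
    rw [abs_mul, Finset.abs_prod]
    calc _ ≤ (CK * ∏ i, dist x (y i) ^ (-(κ i + δ))) *
          ∏ i, (L * dist x (y i) ^ δ * |f i (y i)|) := by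
          gcongr with i
          · exact hK'.trans (by gcongr)
          · rw [abs_mul]
            gcongr
            exact hb i _ _
      _ = _ := by
          rw [mul_assoc, ← Finset.prod_mul_distrib, mul_assoc, ← Fin.prod_const,
            ← Finset.prod_mul_distrib]
          congr 1
          refine Finset.prod_congr rfl fun i _ => ?_
          have : dist x (y i) ^ (-κ i) = dist x (y i) ^ (-(κ i + δ)) * dist x (y i) ^ δ := by
            rw [← Real.rpow_add (hd i)]
            congr 1
            ring
          rw [this]
          ring
  rw [Real.enorm_eq_ofReal_abs]
  refine (ENNReal.ofReal_le_ofReal hreal).trans (le_of_eq ?_)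
  rw [ENNReal.ofReal_mul (by positivity), ENNReal.ofReal_prod_of_nonneg fun i _ => by positivity]
  congr 1
  refine Finset.prod_congr rfl fun i _ => ?_
  rw [ENNReal.ofReal_mul (by positivity), ← ENNReal.ofReal_rpow_of_pos (hd i), ← edist_dist,
    Real.enorm_eq_ofReal_abs]

/-- Telescoping bound for a difference of products. Writing it with `M ^ card * (ε / M)` avoids the
truncated exponent `card - 1`. -/
theorem prod_sub_prod_bound {ι : Type*} (s : Finset ι) (A B : ι → ℝ) {M ε : ℝ} (hM : 0 < M)
    (hA : ∀ i ∈ s, |A i| ≤ M) (hB : ∀ i ∈ s, |B i| ≤ M) (hAB : ∀ i ∈ s, |A i - B i| ≤ ε) :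
    |∏ i ∈ s, A i - ∏ i ∈ s, B i| ≤ s.card * (M ^ s.card * (ε / M)) := by
  induction s using Finset.induction with
  | empty => simp
  | insert a s ha ih =>
    have ih := ih (fun i hi => hA i (Finset.mem_insert_of_mem hi))
      (fun i hi => hB i (Finset.mem_insert_of_mem hi))
      (fun i hi => hAB i (Finset.mem_insert_of_mem hi))
    have ha1 := hB a (Finset.mem_insert_self _ _)
    have ha2 := hAB a (Finset.mem_insert_self _ _)
    have hε : 0 ≤ ε := (abs_nonneg _).trans ha2
    have hAp : |∏ i ∈ s, A i| ≤ M ^ s.card := by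
      rw [Finset.abs_prod]
      exact (Finset.prod_le_prod (fun i _ => abs_nonneg _) fun i hi =>
        hA i (Finset.mem_insert_of_mem hi)).trans (by simp [Finset.prod_const])
    rw [Finset.prod_insert ha, Finset.prod_insert ha, Finset.card_insert_of_notMem ha]
    have : A a * ∏ i ∈ s, A i - B a * ∏ i ∈ s, B i =
        (A a - B a) * ∏ i ∈ s, A i + B a * (∏ i ∈ s, A i - ∏ i ∈ s, B i) := by ring
    rw [this]
    calc _ ≤ |A a - B a| * |∏ i ∈ s, A i| + |B a| * |∏ i ∈ s, A i - ∏ i ∈ s, B i| := by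
          rw [← abs_mul, ← abs_mul]
          exact abs_add_le _ _
      _ ≤ ε * M ^ s.card + M * (s.card * (M ^ s.card * (ε / M))) := by gcongr
      _ = _ := by
          push_cast
          field_simp
          ring

/-- The kernel difference contributes `R^γ S^{-γ}` and the difference of the symbol products
contributes `R^δ S^{-δ}`, where `S` is the sum of the distances to `c`. As `R ≤ S` and `δ < γ`, the
second rate dominates. -/
theorem integrand_smooth_real {n m : ℕ} {α γ δ : ℝ} (hδ : 0 < δ) (hδγ : δ < γ)
    {K : Rn n → (Fin m → Rn n) → ℝ} (hK : SizeCond n m α K) (hKs : SmoothCond n m α γ K)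
    {b : Fin m → Rn n → ℝ} (hb : ∀ i, MemLip n δ (b i)) :
    ∃ C : ℝ, 0 ≤ C ∧ ∀ (f : Fin m → Rn n → ℝ) (c : Rn n) (R : ℝ), 0 < R → ∀ x ∈ ball c R,
      ∀ y : Fin m → Rn n, 2 * R ≤ ∑ i, dist c (y i) →
      |commIntegrand n m K b f x y - commIntegrand n m K b f c y| ≤
        C * R ^ δ * (∑ i, dist c (y i)) ^ (-(m * n - (α + m * δ) + δ)) * ∏ i, |f i (y i)| := by
  obtain ⟨L, hL, hb⟩ := uniform_lip hb
  obtain ⟨CK, hCK, hK⟩ := hK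
  obtain ⟨CS, hCS, hKs⟩ := hKs
  refine ⟨(CS + m * CK) * L ^ m * (2 ^ δ) ^ m, by positivity, fun f c R hR x hx y hy => ?_⟩
  set S := ∑ i, dist c (y i) with hS
  have hS0 : 0 < S := by linarith
  have hdS : ∀ i, dist c (y i) ≤ S := fun i =>
    Finset.single_le_sum (fun i _ => dist_nonneg) (Finset.mem_univ i)
  rw [mem_ball] at hx
  have hK1 := hK c y hS0.ne'
  have hK2 : |K x y - K c y| ≤ CS * R ^ γ * S ^ (α - (m : ℝ) * n - γ) := by
    rw [abs_sub_comm]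
    refine (hKs c x y (by rw [dist_comm]; linarith)).trans ?_
    have hγ : 0 ≤ γ := by linarith
    rw [dist_comm]
    gcongr
  set A : Fin m → ℝ := fun i => b i x - b i (y i) with hA
  set B : Fin m → ℝ := fun i => b i c - b i (y i) with hB
  set M := L * (2 * S) ^ δ with hM
  have hM0 : 0 < M := by positivity
  have hAM : ∀ i, |A i| ≤ M := fun i => by
    refine (hb i _ _).trans ?_
    rw [hM]
    gcongr
    have := dist_triangle x c (y i)
    have := hdS i
    linarith
  have hBM : ∀ i, |B i| ≤ M := fun i => by
    refine (hb i _ _).trans ?_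
    rw [hM]
    gcongr
    have := hdS i
    linarith
  have hABe : ∀ i, |A i - B i| ≤ L * R ^ δ := fun i => by
    have : A i - B i = b i x - b i c := by simp [hA, hB]
    rw [this]
    refine (hb i _ _).trans ?_
    gcongr
  have hprod := prod_sub_prod_bound Finset.univ A B hM0 (fun i _ => hAM i) (fun i _ => hBM i)
    (fun i _ => hABe i)
  have hAp : |∏ i, A i| ≤ M ^ m := by
    rw [Finset.abs_prod]
    exact (Finset.prod_le_prod (fun i _ => abs_nonneg _) fun i _ => hAM i).trans
      (by simp [Finset.prod_const])
  simp only [Finset.card_univ, Fintype.card_fin] at hprod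
  have hsplit : commIntegrand n m K b f x y - commIntegrand n m K b f c y =
      ((K x y - K c y) * ∏ i, A i + K c y * (∏ i, A i - ∏ i, B i)) * ∏ i, f i (y i) := by
    unfold commIntegrand
    rw [Finset.prod_mul_distrib, Finset.prod_mul_distrib]
    ring
  rw [hsplit, abs_mul, Finset.abs_prod]
  gcongr
  have hMm : M ^ m = L ^ m * (2 ^ δ) ^ m * S ^ (m * δ) := by
    rw [hM, Real.mul_rpow (by norm_num) hS0.le, mul_pow, mul_pow, mul_comm (m : ℝ) δ,
      Real.rpow_mul_natCast hS0.le, mul_assoc]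
  have hε : L * R ^ δ / M ≤ R ^ δ * S ^ (-δ) := by
    rw [div_le_iff₀ hM0, hM, Real.mul_rpow (by norm_num) hS0.le]
    have h1 : S ^ (-δ) * S ^ δ = 1 := by rw [← Real.rpow_add hS0]; simp
    have h2 : (1 : ℝ) ≤ 2 ^ δ := Real.one_le_rpow (by norm_num) hδ.le
    calc L * R ^ δ = L * R ^ δ * 1 * (S ^ (-δ) * S ^ δ) := by rw [h1]; ring
      _ ≤ L * R ^ δ * 2 ^ δ * (S ^ (-δ) * S ^ δ) := by gcongr
      _ = _ := by ring
  have hγδ : R ^ γ * S ^ (-γ) ≤ R ^ δ * S ^ (-δ) := by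
    rw [Real.rpow_neg hS0.le, Real.rpow_neg hS0.le, ← div_eq_mul_inv, ← div_eq_mul_inv,
      ← Real.div_rpow hR.le hS0.le, ← Real.div_rpow hR.le hS0.le]
    exact Real.rpow_le_rpow_of_exponent_ge (by positivity) ((div_le_one hS0).2 (by linarith)) hδγ.le
  calc _ ≤ |K x y - K c y| * |∏ i, A i| + |K c y| * |∏ i, A i - ∏ i, B i| := by
        rw [← abs_mul, ← abs_mul]
        exact abs_add_le _ _
    _ ≤ CS * R ^ γ * S ^ (α - (m : ℝ) * n - γ) * M ^ m +
        CK * S ^ (α - (m : ℝ) * n) * (m * (M ^ m * (R ^ δ * S ^ (-δ)))) := by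
        gcongr
        exact hprod.trans (by gcongr)
    _ = CS * (R ^ γ * S ^ (-γ)) * S ^ (α - (m : ℝ) * n) * M ^ m +
        CK * S ^ (α - (m : ℝ) * n) * (m * (M ^ m * (R ^ δ * S ^ (-δ)))) := by
        rw [sub_eq_add_neg _ γ, Real.rpow_add hS0]
        ring
    _ ≤ CS * (R ^ δ * S ^ (-δ)) * S ^ (α - (m : ℝ) * n) * M ^ m +
        CK * S ^ (α - (m : ℝ) * n) * (m * (M ^ m * (R ^ δ * S ^ (-δ)))) := by gcongr
    _ = _ := by
        have : -(m * n - (α + m * δ) + δ) = -δ + (α - (m : ℝ) * n) + m * δ := by ring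
        rw [this, Real.rpow_add hS0, Real.rpow_add hS0, hMm]
        ring

/-! ### Far and near parts of the commutator -/

/-- The cube `(B(c,2R))^m`, the region of nearby variables. -/
def nearSet (n m : ℕ) (c : Rn n) (R : ℝ) : Set (Fin m → Rn n) :=
  univ.pi fun _ => ball c (2 * R)

theorem measurableSet_nearSet (n m : ℕ) (c : Rn n) (R : ℝ) : MeasurableSet (nearSet n m c R) :=
  MeasurableSet.univ_pi fun _ => measurableSet_ball

/-- Outside `nearSet`, the difference of the integrands at `x` and at the centre `c` is dominated
by a product of functions of one variable, with the tail powers of the class `H_m`. -/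
theorem integrand_smooth {n m : ℕ} (hn : 1 ≤ n) {α γ δ : ℝ} (hδ : 0 < δ) (hδγ : δ < γ)
    {K : Rn n → (Fin m → Rn n) → ℝ} (hK : SizeCond n m α K) (hKs : SmoothCond n m α γ K)
    {b : Fin m → Rn n → ℝ} (hb : ∀ i, MemLip n δ (b i)) {e : Fin m → ℝ} (he : ∀ i, 0 ≤ e i)
    (hes : ∑ i, e i = m * n - (α + m * δ) + δ) :
    ∃ C : ℝ≥0∞, C ≠ ∞ ∧ ∀ (f : Fin m → Rn n → ℝ) (c : Rn n) (R : ℝ), 0 < R → ∀ x ∈ ball c R,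
      ∀ y ∉ nearSet n m c R,
      ‖commIntegrand n m K b f x y - commIntegrand n m K b f c y‖ₑ ≤
        C * ENNReal.ofReal R ^ δ * ∏ i, ‖f i (y i)‖ₑ *
          (volume (ball c R) ^ (n : ℝ)⁻¹ + edist c (y i)) ^ (-e i) := by
  obtain ⟨C, hC, h⟩ := integrand_smooth_real hδ hδγ hK hKs hb
  set ω := volume (ball (0 : Rn n) 1) ^ (n : ℝ)⁻¹ with hω
  have hωt : ω + 1 ≠ ∞ := ENNReal.add_ne_top.2 ⟨unit_ball_root.2, ENNReal.one_ne_top⟩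
  have hω0 : ω + 1 ≠ 0 := by simp
  refine ⟨ENNReal.ofReal C * ∏ i, (ω + 1) ^ e i,
    ENNReal.mul_ne_top (by simp) (ENNReal.prod_ne_top fun i _ =>
      ENNReal.rpow_ne_top_of_nonneg (he i) hωt), fun f c R hR x hx y hy => ?_⟩
  have hdS : ∀ i, dist c (y i) ≤ ∑ i, dist c (y i) := fun i =>
    Finset.single_le_sum (fun i _ => dist_nonneg) (Finset.mem_univ i)
  have hyS : 2 * R ≤ ∑ i, dist c (y i) := by
    simp only [nearSet, Set.mem_univ_pi, mem_ball, not_forall, not_lt] at hy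
    obtain ⟨i, hi⟩ := hy
    rw [dist_comm] at hi
    exact hi.trans (hdS i)
  have hreal := h f c R hR x hx y hyS
  set S := ∑ i, dist c (y i) with hS
  have hS0 : 0 < S := by linarith
  have hSR : ENNReal.ofReal S ≠ 0 := by simpa using hS0
  have hfac : ∀ i, ENNReal.ofReal (S ^ (-e i)) ≤
      (ω + 1) ^ e i * (volume (ball c R) ^ (n : ℝ)⁻¹ + edist c (y i)) ^ (-e i) := by
    intro i
    have hP : volume (ball c R) ^ (n : ℝ)⁻¹ + edist c (y i) ≤ (ω + 1) * ENNReal.ofReal S := by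
      rw [tail_base_eq hn c hR, edist_dist, add_mul, one_mul, mul_comm]
      gcongr
      · linarith
      · exact hdS i
    calc ENNReal.ofReal (S ^ (-e i)) = ENNReal.ofReal S ^ (-e i) :=
          (ENNReal.ofReal_rpow_of_pos hS0).symm
      _ = (ω + 1) ^ e i * ((ω + 1) * ENNReal.ofReal S) ^ (-e i) := by
          rw [ENNReal.mul_rpow_of_ne_top hωt (by simp), ← mul_assoc, ← ENNReal.rpow_add _ _ hω0 hωt]
          simp
      _ ≤ _ := by
          refine mul_le_mul_right ?_ _
          rw [ENNReal.rpow_neg, ENNReal.rpow_neg, ENNReal.inv_le_inv]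
          exact ENNReal.rpow_le_rpow hP (he i)
  rw [Real.enorm_eq_ofReal_abs]
  refine (ENNReal.ofReal_le_ofReal hreal).trans ?_
  rw [← hes, ← Finset.sum_neg_distrib, Real.rpow_sum_of_pos hS0, ENNReal.ofReal_mul (by positivity),
    ENNReal.ofReal_mul (by positivity), ENNReal.ofReal_mul hC,
    ENNReal.ofReal_prod_of_nonneg (fun i _ => by positivity),
    ENNReal.ofReal_prod_of_nonneg (fun i _ => by positivity), ← ENNReal.ofReal_rpow_of_pos hR]
  calc _ ≤ ENNReal.ofReal C * ENNReal.ofReal R ^ δ *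
        (∏ i, (ω + 1) ^ e i * (volume (ball c R) ^ (n : ℝ)⁻¹ + edist c (y i)) ^ (-e i)) *
        ∏ i, ENNReal.ofReal |f i (y i)| := by
        gcongr with i
        exact hfac i
    _ = _ := by
        simp only [Real.enorm_eq_ofReal_abs, Finset.prod_mul_distrib]
        ring

/-- Hölder's inequality against the tail weight, in each variable. -/
theorem tail_integral {n m : ℕ} {e : Fin m → ℝ} {p : Fin m → ℝ≥0∞} (hp : ∀ i, 1 ≤ p i)
    {v : Fin m → Rn n → ℝ≥0∞} (hv : ∀ i, IsWeight n (v i)) (c : Rn n) (R : ℝ)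
    {f : Fin m → Rn n → ℝ} (hf : ∀ i, Measurable (f i)) :
    ∫⁻ y, ∏ i, ‖f i (y i)‖ₑ * (volume (ball c R) ^ (n : ℝ)⁻¹ + edist c (y i)) ^ (-e i) ∂pim n m ≤
      ∏ i, wLpNorm n (f i) (v i) (p i) * tailNorm n (e i) (p i) (v i) c R := by
  have hd : Measurable fun t : Rn n => edist c t := measurable_edist_right
  unfold pim
  rw [lintegral_pi_prod m volume
    (fun i t => ‖f i t‖ₑ * (volume (ball c R) ^ (n : ℝ)⁻¹ + edist c t) ^ (-e i))
    (fun i => (hf i).enorm.mul ((measurable_const.add hd).pow_const _))]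
  refine Finset.prod_le_prod' fun i _ => ?_
  have hvi := (hv i).1
  refine le_trans (le_of_eq ?_) (holder_LpNormE (g := fun t => ENNReal.ofReal |f i t| * v i t)
    (k := fun t => (v i t)⁻¹ * (volume (ball c R) ^ (n : ℝ)⁻¹ + edist c t) ^ (-e i))
    ((hf i).norm.ennreal_ofReal.mul hvi)
    (hvi.inv.mul ((measurable_const.add hd).pow_const _)) (hp i))
  refine lintegral_congr_ae ?_
  filter_upwards [weight_cancel (hv i) fun t => ‖f i t‖ₑ] with t ht
  rw [ht, Real.enorm_eq_ofReal_abs]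
  ring

/-- The far part of the commutator oscillates by at most a multiple of `R^δ` on the ball. -/
theorem global_estimate {n m : ℕ} (hn : 1 ≤ n) {α γ δ : ℝ} (hδ : 0 < δ) (hδγ : δ < γ)
    {K : Rn n → (Fin m → Rn n) → ℝ} (hK : SizeCond n m α K) (hKs : SmoothCond n m α γ K)
    {b : Fin m → Rn n → ℝ} (hb : ∀ i, MemLip n δ (b i)) {e : Fin m → ℝ} (he : ∀ i, 0 ≤ e i)
    (hes : ∑ i, e i = m * n - (α + m * δ) + δ) {p : Fin m → ℝ≥0∞} (hp : ∀ i, 1 ≤ p i)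
    {v : Fin m → Rn n → ℝ≥0∞} (hv : ∀ i, IsWeight n (v i)) :
    ∃ C : ℝ≥0∞, C ≠ ∞ ∧ ∀ (f : Fin m → Rn n → ℝ), (∀ i, Measurable (f i)) →
      ∀ (c : Rn n) (R : ℝ), 0 < R → ∀ x ∈ ball c R,
      ∫⁻ y in (nearSet n m c R)ᶜ,
        ‖commIntegrand n m K b f x y - commIntegrand n m K b f c y‖ₑ ∂pim n m ≤
        C * ENNReal.ofReal R ^ δ *
          ∏ i, wLpNorm n (f i) (v i) (p i) * tailNorm n (e i) (p i) (v i) c R := by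
  obtain ⟨C, hC, h⟩ := integrand_smooth hn hδ hδγ hK hKs hb he hes
  refine ⟨C, hC, fun f hf c R hR x hx => ?_⟩
  calc _ ≤ ∫⁻ y in (nearSet n m c R)ᶜ, C * ENNReal.ofReal R ^ δ * ∏ i, ‖f i (y i)‖ₑ *
          (volume (ball c R) ^ (n : ℝ)⁻¹ + edist c (y i)) ^ (-e i) ∂pim n m :=
        setLIntegral_mono' (measurableSet_nearSet n m c R).compl fun y hy => h f c R hR x hx y hy
    _ ≤ ∫⁻ y, C * ENNReal.ofReal R ^ δ * ∏ i, ‖f i (y i)‖ₑ *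
          (volume (ball c R) ^ (n : ℝ)⁻¹ + edist c (y i)) ^ (-e i) ∂pim n m :=
        setLIntegral_le_lintegral _ _
    _ ≤ _ := by
        rw [lintegral_const_mul' _ _
          (ENNReal.mul_ne_top hC (ENNReal.rpow_ne_top_of_nonneg hδ.le (by simp)))]
        gcongr
        exact tail_integral hp hv c R hf

/-- After distributing the singularity, the integral over `nearSet` factors; the generalized Hölder
inequality with exponents `1/m` over the ball reduces it to the one-variable local estimate. -/
theorem local_estimate {n m : ℕ} (hn : 1 ≤ n) (hm : 1 ≤ m) {α δ : ℝ} (hδ : 0 < δ)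
    (hM : 0 < m * n - (α + m * δ))
    {K : Rn n → (Fin m → Rn n) → ℝ} (hK : SizeCond n m α K)
    {b : Fin m → Rn n → ℝ} (hb : ∀ i, MemLip n δ (b i)) {e : Fin m → ℝ} (he : ∀ i, 0 ≤ e i)
    (hes : ∑ i, e i = m * n - (α + m * δ) + δ) {p : Fin m → ℝ≥0∞} (hp : ∀ i, 1 ≤ p i)
    (hpn : ∑ i, (p i)⁻¹ < ENNReal.ofReal ((α + m * δ) / (n : ℝ)))
    {v : Fin m → Rn n → ℝ≥0∞} (hv : ∀ i, IsWeight n (v i))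
    (hRH : ∀ i, 1 < p i → MemRH n (m : ℝ) fun x => (v i x)⁻¹ ^ conjR (p i)) :
    ∃ C : ℝ≥0∞, C ≠ ∞ ∧ ∀ (f : Fin m → Rn n → ℝ), (∀ i, Measurable (f i)) →
      ∀ (c : Rn n) (R : ℝ), 0 < R →
      ∫⁻ x in ball c R, ∫⁻ y in nearSet n m c R, ‖commIntegrand n m K b f x y‖ₑ ∂pim n m ≤
        C * ENNReal.ofReal R ^ (n + δ) *
          ∏ i, wLpNorm n (f i) (v i) (p i) * tailNorm n (e i) (p i) (v i) c R := by
  have hm0 : (0 : ℝ) < m := by exact_mod_cast hm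
  have hpi1 : ∀ i, (p i)⁻¹ ≤ 1 := fun i => ENNReal.inv_le_one.2 (hp i)
  have hpit : ∀ i, (p i)⁻¹ ≠ ∞ := fun i => ne_top_of_le_ne_top ENNReal.one_ne_top (hpi1 i)
  have hsum : ∑ i, ((p i)⁻¹).toReal < (α + m * δ) / n := by
    rw [← ENNReal.toReal_sum fun i _ => hpit i]
    exact (ENNReal.lt_ofReal_iff_toReal_lt (ENNReal.sum_ne_top.2 fun i _ => hpit i)).1 hpn
  obtain ⟨κ, hκ0, hκ, hκs⟩ := exists_split hn hm hM rfl (t := fun i => ((p i)⁻¹).toReal)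
    (fun i => ENNReal.toReal_nonneg)
    (fun i => ENNReal.toReal_le_of_le_ofReal one_pos.le (by simpa using hpi1 i)) hsum
  obtain ⟨C, hC, hsize⟩ := integrand_size hδ hK hb hκ0 hκs hm
  choose D hD hloc using fun i => local_factor hn hm (he i) (hp i) (hκ i) (hv i) (hRH i)
  refine ⟨C * ∏ i, D i ^ (m : ℝ)⁻¹, ENNReal.mul_ne_top hC (ENNReal.prod_ne_top fun i _ =>
    ENNReal.rpow_ne_top_of_nonneg (by positivity) (hD i)), fun f hf c R hR => ?_⟩
  have hR0 : ENNReal.ofReal R ≠ 0 := by simpa using hR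
  have hed : Measurable fun q : Rn n × Rn n => edist q.1 q.2 := measurable_fst.edist measurable_snd
  set I : Fin m → Rn n → ℝ≥0∞ := fun i x =>
    ∫⁻ t in ball c (2 * R), edist x t ^ (-κ i) * ENNReal.ofReal |f i t| with hI
  have hImeas : ∀ i, Measurable (I i) := fun i =>
    Measurable.lintegral_prod_right (((hed.pow_const _)).mul
      ((hf i).norm.ennreal_ofReal.comp measurable_snd))
  have hinner : ∀ x, ∫⁻ y in nearSet n m c R, ‖commIntegrand n m K b f x y‖ₑ ∂pim n m ≤
      C * ∏ i, (I i x ^ (m : ℝ)) ^ (m : ℝ)⁻¹ := by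
    intro x
    refine (lintegral_mono fun y => hsize f x y).trans ?_
    rw [lintegral_const_mul' _ _ hC]
    unfold nearSet
    rw [lintegral_restrict_pi_prod n m (ball c (2 * R))
      (fun i t => edist x t ^ (-κ i) * ‖f i t‖ₑ)
      (fun i => ((measurable_edist_right (x := x)).pow_const _).mul (hf i).enorm)]
    simp only [hI, ENNReal.rpow_rpow_inv hm0.ne', Real.enorm_eq_ofReal_abs, le_refl]
  have hholder := ENNReal.lintegral_prod_norm_pow_le (μ := volume.restrict (ball c R)) Finset.univ
    (f := fun i x => I i x ^ (m : ℝ)) (fun i _ => ((hImeas i).pow_const _).aemeasurable)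
    (p := fun _ => (m : ℝ)⁻¹) (by simp [hm0.ne']) (fun i _ => by positivity)
  have hfac : ∀ i, (∫⁻ x in ball c R, I i x ^ (m : ℝ)) ^ (m : ℝ)⁻¹ ≤
      D i ^ (m : ℝ)⁻¹ * ENNReal.ofReal R ^ (n * (m : ℝ)⁻¹ - κ i + e i) *
        (wLpNorm n (f i) (v i) (p i) * tailNorm n (e i) (p i) (v i) c R) := by
    intro i
    refine (ENNReal.rpow_le_rpow (hloc i c R hR (fun t => ENNReal.ofReal |f i t|)
      (hf i).norm.ennreal_ofReal) (by positivity)).trans (le_of_eq ?_)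
    rw [ENNReal.mul_rpow_of_nonneg _ _ (by positivity), ENNReal.mul_rpow_of_nonneg _ _
      (by positivity), ENNReal.rpow_rpow_inv hm0.ne', ← ENNReal.rpow_mul]
    congr 3
    field_simp
  calc _ ≤ ∫⁻ x in ball c R, C * ∏ i, (I i x ^ (m : ℝ)) ^ (m : ℝ)⁻¹ :=
        lintegral_mono fun x => hinner x
    _ = C * ∫⁻ x in ball c R, ∏ i, (I i x ^ (m : ℝ)) ^ (m : ℝ)⁻¹ := lintegral_const_mul' _ _ hC
    _ ≤ C * ∏ i, (D i ^ (m : ℝ)⁻¹ * ENNReal.ofReal R ^ (n * (m : ℝ)⁻¹ - κ i + e i) *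
        (wLpNorm n (f i) (v i) (p i) * tailNorm n (e i) (p i) (v i) c R)) := by
        gcongr
        exact hholder.trans (Finset.prod_le_prod' fun i _ => hfac i)
    _ = _ := by
        have hs : (n : ℝ) + δ = ∑ i, (n * (m : ℝ)⁻¹ - κ i + e i) := by
          rw [Finset.sum_add_distrib, Finset.sum_sub_distrib, hes, hκs]
          simp
          field_simp
          ring
        have hprod : ∏ i, ENNReal.ofReal R ^ (n * (m : ℝ)⁻¹ - κ i + e i) =
            ENNReal.ofReal R ^ ((n : ℝ) + δ) := by
          rw [hs, ENNReal.ofReal_rpow_of_pos hR, Real.rpow_sum_of_pos hR,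
            ENNReal.ofReal_prod_of_nonneg fun i _ => by positivity]
          exact Finset.prod_congr rfl fun i _ => ENNReal.ofReal_rpow_of_pos hR
        rw [Finset.prod_mul_distrib, Finset.prod_mul_distrib, hprod]
        ring

/-! ### Oscillation and comparison with a constant -/

/-- The mean oscillation is at most twice the mean deviation from any constant. No integrability is
assumed: when the right-hand side is finite, `F` is integrable. -/
theorem osc_le {X : Type*} [MeasurableSpace X] {μ : Measure X} [IsFiniteMeasure μ] {F : X → ℝ}
    (hF : AEStronglyMeasurable F μ) (a : ℝ) :
    ∫⁻ x, ENNReal.ofReal |F x - (μ univ).toReal⁻¹ * ∫ z, F z ∂μ| ∂μ ≤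
      2 * ∫⁻ x, ‖F x - a‖ₑ ∂μ := by
  set J := ∫⁻ x, ‖F x - a‖ₑ ∂μ with hJ
  by_cases hJt : J = ∞
  · simp [hJt]
  by_cases hμ : μ univ = 0
  · rw [Measure.measure_univ_eq_zero.1 hμ]
    simp
  have hFa : Integrable (fun x => F x - a) μ :=
    ⟨hF.sub aestronglyMeasurable_const, lt_top_iff_ne_top.2 hJt⟩
  have hFi : Integrable F μ := 
    (hFa.add (integrable_const a)).congr (Filter.Eventually.of_forall fun x => by simp)
  set M := (μ univ).toReal with hM
  have hM0 : 0 < M := ENNReal.toReal_pos hμ (measure_ne_top _ _)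
  have hMμ : ENNReal.ofReal M⁻¹ * μ univ = 1 := by
    rw [ENNReal.ofReal_inv_of_pos hM0, hM, ENNReal.ofReal_toReal (measure_ne_top _ _)]
    exact ENNReal.inv_mul_cancel hμ (measure_ne_top _ _)
  have hint : ∫ z, F z - a ∂μ = ∫ z, F z ∂μ - M * a := by
    rw [integral_sub hFi (integrable_const a)]
    simp [Measure.real, hM]
  have hpt : ∀ x, ENNReal.ofReal |F x - M⁻¹ * ∫ z, F z ∂μ| ≤
      ‖F x - a‖ₑ + ENNReal.ofReal M⁻¹ * J := by
    intro x
    have : F x - M⁻¹ * ∫ z, F z ∂μ = (F x - a) - M⁻¹ * ∫ z, F z - a ∂μ := by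
      rw [hint]
      field_simp
      ring
    rw [← Real.enorm_eq_ofReal_abs, this]
    refine (enorm_sub_le).trans ?_
    gcongr
    rw [enorm_mul, Real.enorm_eq_ofReal (by positivity)]
    gcongr
    exact enorm_integral_le_lintegral_enorm _
  calc _ ≤ ∫⁻ x, ‖F x - a‖ₑ + ENNReal.ofReal M⁻¹ * J ∂μ := lintegral_mono hpt
    _ = 2 * J := by
        rw [lintegral_add_right _ measurable_const, lintegral_const, mul_right_comm, hMμ, two_mul,
          one_mul]

/-- Comparison of a parametric integral with a constant. The near part `E` is integrated absolutely
and the far part is compared with the value at the reference point `c`. If `G c` fails to be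
integrable on `Eᶜ`, then so does `G x` for almost every `x`; the integrals then all vanish by
convention and the constant `0` works. -/
theorem exists_const_close {X Y : Type*} [MeasurableSpace X] [MeasurableSpace Y] {μ : Measure X}
    {ν : Measure Y} [SFinite ν] {G : X → Y → ℝ} (hG : Measurable (Function.uncurry G))
    {E : Set Y} (hE : MeasurableSet E) (c : X) {A : ℝ≥0∞}
    (h1 : ∫⁻ x, ∫⁻ y in E, ‖G x y‖ₑ ∂ν ∂μ ≠ ∞) (hA : A ≠ ∞)
    (h2 : ∀ᵐ x ∂μ, ∫⁻ y in Eᶜ, ‖G x y - G c y‖ₑ ∂ν ≤ A) :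
    ∃ a : ℝ, ∫⁻ x, ‖∫ y, G x y ∂ν - a‖ₑ ∂μ ≤
      ∫⁻ x, ∫⁻ y in E, ‖G x y‖ₑ ∂ν ∂μ + A * μ univ := by
  have hGx : ∀ x, Measurable (G x) := fun x => hG.comp measurable_prodMk_left
  have hdiff : ∀ x, ∫⁻ y in Eᶜ, ‖G x y - G c y‖ₑ ∂ν ≤ A →
      IntegrableOn (fun y => G x y - G c y) Eᶜ ν := fun x hx =>
    ⟨((hGx x).sub (hGx c)).aestronglyMeasurable, hx.trans_lt (lt_top_iff_ne_top.2 hA)⟩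
  by_cases hc : IntegrableOn (G c) Eᶜ ν
  · refine ⟨∫ y in Eᶜ, G c y ∂ν, ?_⟩
    have hfin : ∀ᵐ x ∂μ, ∫⁻ y in E, ‖G x y‖ₑ ∂ν < ∞ :=
      ae_lt_top (Measurable.lintegral_prod_right hG.enorm) h1
    calc _ ≤ ∫⁻ x, ∫⁻ y in E, ‖G x y‖ₑ ∂ν + A ∂μ := by
          refine lintegral_mono_ae ?_
          filter_upwards [hfin, h2] with x hx1 hx2
          have hxE : IntegrableOn (G x) E ν := ⟨(hGx x).aestronglyMeasurable, hx1⟩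
          have hxEc : IntegrableOn (G x) Eᶜ ν :=
            ((hdiff x hx2).add hc).congr (Filter.Eventually.of_forall fun y => by simp)
          have hxi : Integrable (G x) ν := by
            rw [← integrableOn_univ, ← union_compl_self E]
            exact hxE.union hxEc
          have : ∫ y, G x y ∂ν - ∫ y in Eᶜ, G c y ∂ν =
              ∫ y in E, G x y ∂ν + ∫ y in Eᶜ, G x y - G c y ∂ν := by
            rw [← integral_add_compl hE hxi, integral_sub hxEc hc]
            ring
          rw [this]
          refine (enorm_add_le _ _).trans ?_
          gcongr
          · exact enorm_integral_le_lintegral_enorm _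
          · exact (enorm_integral_le_lintegral_enorm _).trans hx2
      _ = _ := by rw [lintegral_add_right _ measurable_const, lintegral_const]
  · refine ⟨0, ?_⟩
    have : ∀ᵐ x ∂μ, ‖∫ y, G x y ∂ν - 0‖ₑ = 0 := by
      filter_upwards [h2] with x hx
      rw [integral_undef fun hxi => hc ?_]
      · simp
      · exact (hxi.integrableOn.sub (hdiff x hx)).congr
          (Filter.Eventually.of_forall fun y => by simp)
    rw [lintegral_congr_ae this]
    simp

/-- Positivity of the supremum of `w`; it forces the product of the tail norms to be finite. -/
theorem essSup_ne_zero {n : ℕ} {w : Rn n → ℝ≥0∞} (hw : IsWeight n w) (c : Rn n) {R : ℝ}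
    (hR : 0 < R) : essSup w (volume.restrict (ball c R)) ≠ 0 := by
  intro h0
  have h1 : ∀ᵐ x ∂volume.restrict (ball c R), w x = 0 := ENNReal.essSup_eq_zero_iff.1 h0
  have h2 : ∀ᵐ x ∂volume.restrict (ball c R), 0 < w x ∧ w x < ∞ := ae_restrict_of_ae hw.2.1
  have h3 : ∀ᵐ x ∂volume.restrict (ball c R), False := by
    filter_upwards [h1, h2] with x hx1 hx2
    exact hx2.1.ne' hx1
  rw [Filter.eventually_false_iff_eq_bot, ae_eq_bot, Measure.restrict_eq_zero] at h3
  exact (measure_ball_pos volume c hR).ne' h3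

theorem measurable_commIntegrand {n m : ℕ} {K : Rn n → (Fin m → Rn n) → ℝ}
    (hK : Measurable fun q : Rn n × (Fin m → Rn n) => K q.1 q.2)
    {b f : Fin m → Rn n → ℝ} (hb : ∀ i, Measurable (b i)) (hf : ∀ i, Measurable (f i)) :
    Measurable (Function.uncurry (commIntegrand n m K b f)) := by
  refine hK.mul (Finset.measurable_prod _ fun i _ => ?_)
  have hy : Measurable fun q : Rn n × (Fin m → Rn n) => q.2 i :=
    (measurable_pi_apply i).comp measurable_snd
  exact (((hb i).comp measurable_fst).sub ((hb i).comp hy)).mul ((hf i).comp hy)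

/-! ### The Lipschitz bound -/

/-- Theorem 1.2: boundedness of the product-type commutator `𝒯^m_{α,b}` from a product of
weighted Lebesgue spaces into the weighted Lipschitz space `𝕃_w(δ̃)`. -/
theorem prod_commutator_Lp_Lipschitz_bound
    (n m : ℕ) (hn : 1 ≤ n) (hm : 1 ≤ m) (α γ δ δt : ℝ)
    (hα : 0 < α) (hαmn : α < (m : ℝ) * n) (hγ : 0 < γ) (hγ1 : γ ≤ 1)
    (hδ : 0 < δ) (hδγ : δ < γ) (hδα : δ < ((m : ℝ) * n - α) / m) (hδt : δt ≤ δ)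
    (K : Rn n → (Fin m → Rn n) → ℝ)
    (hKmeas : Measurable fun q : Rn n × (Fin m → Rn n) => K q.1 q.2)
    (hKsize : SizeCond n m α K) (hKsmooth : SmoothCond n m α γ K)
    (p : Fin m → ℝ≥0∞) (hp : ∀ i, 1 ≤ p i)
    (hpn : ∑ i, (p i)⁻¹ < ENNReal.ofReal ((α + m * δ) / (n : ℝ)))
    (b : Fin m → Rn n → ℝ) (hbmeas : ∀ i, Measurable (b i)) (hb : ∀ i, MemLip n δ (b i))
    (β : Fin m → ℝ) (hβ : ∀ i, 0 < β i ∧ β i < n) (hβsum : ∑ i, β i = α + m * δ)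
    (w : Rn n → ℝ≥0∞) (v : Fin m → Rn n → ℝ≥0∞)
    (hw : IsWeight n w) (hv : ∀ i, IsWeight n (v i))
    (hH : MemHm n m δ δt β p w v)
    (hRH : ∀ i, 1 < p i → MemRH n (m : ℝ) fun x => (v i x)⁻¹ ^ conjR (p i)) :
    ∃ C : ℝ≥0∞, C ≠ ∞ ∧ ∀ (c : Rn n) (R : ℝ), 0 < R →
      ∀ f : Fin m → Rn n → ℝ, (∀ i, Measurable (f i)) →
        (∀ i, wLpNorm n (f i) (v i) (p i) ≠ ∞) →
        essSup w (volume.restrict (ball c R)) /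
              volume (ball c R) ^ (1 + δt / (n : ℝ)) *
            ∫⁻ x in ball c R,
              ENNReal.ofReal
                |TProdComm n m K b f x -
                  (volume (ball c R)).toReal⁻¹ * ∫ z in ball c R, TProdComm n m K b f z| ≤
          C * ∏ i, wLpNorm n (f i) (v i) (p i) := by
  have hn0 : (0 : ℝ) < n := by exact_mod_cast hn
  have hm0 : (0 : ℝ) < m := by exact_mod_cast hm
  have hM : 0 < m * n - (α + m * δ) := by
    rw [lt_div_iff₀ hm0] at hδα
    linarith
  set e : Fin m → ℝ := fun i => n - β i + δ / m with he_def
  have he : ∀ i, 0 ≤ e i := fun i => by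
    have := (hβ i).2
    have : 0 < δ / m := by positivity
    simp only [he_def]
    linarith
  have hes : ∑ i, e i = m * n - (α + m * δ) + δ := by
    simp only [he_def, Finset.sum_add_distrib, Finset.sum_sub_distrib, hβsum]
    simp
    field_simp
  obtain ⟨C₁, hC₁, hloc⟩ := local_estimate hn hm hδ hM hKsize hb he hes hp hpn hv hRH
  obtain ⟨C₂, hC₂, hglob⟩ := global_estimate hn hδ hδγ hKsize hKsmooth hb he hes hp hv
  obtain ⟨C₃, hC₃, hHm⟩ := hH
  set ω := volume (ball (0 : Rn n) 1) with hω
  have hω0 : ω ≠ 0 := (measure_ball_pos volume _ one_pos).ne'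
  have hωt : ω ≠ ∞ := measure_ball_lt_top.ne
  refine ⟨2 * (C₁ + C₂ * ω) * ω ^ (-(1 + δ / n)) * C₃, ?_, fun c R hR f hf hfv => ?_⟩
  · refine ENNReal.mul_ne_top (ENNReal.mul_ne_top (ENNReal.mul_ne_top (by simp)
      (ENNReal.add_ne_top.2 ⟨hC₁, ENNReal.mul_ne_top hC₂ hωt⟩)) ?_) hC₃
    exact ENNReal.rpow_ne_top_of_ne_zero hω0 hωt
  have hr0 : ENNReal.ofReal R ≠ 0 := by simpa using hR
  have hrt : ENNReal.ofReal R ≠ ∞ := by simp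
  have hV := vol_ball_eq c hR
  have hHm := hHm c R hR
  unfold HmLHS at hHm
  set V := volume (ball c R) with hVdef
  have hV0 : V ≠ 0 := (measure_ball_pos volume c hR).ne'
  have hVt : V ≠ ∞ := measure_ball_lt_top.ne
  set W := essSup w (volume.restrict (ball c R)) with hW
  have hW0 : W ≠ 0 := essSup_ne_zero hw c hR
  set r := ENNReal.ofReal R with hr
  set T := ∏ i, tailNorm n (e i) (p i) (v i) c R with hT
  set N := ∏ i, wLpNorm n (f i) (v i) (p i) with hN
  -- `HmFactor` at the index `i` is by definition the tail norm with decay exponent `e i`.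
  have hHm : W / V ^ ((δt - δ) / (n : ℝ)) * T ≤ C₃ := hHm
  -- In `ℝ≥0∞` the condition `W / V ^ _ * T ≤ C₃` only excludes `T = ∞` because `W` is nonzero.
  have hTt : T ≠ ∞ := by
    intro h
    rw [h, ENNReal.mul_top] at hHm
    · exact hC₃ (top_le_iff.1 hHm)
    · exact (ENNReal.div_pos hW0 (ENNReal.rpow_ne_top_of_ne_zero hV0 hVt)).ne'
  have hNt : N ≠ ∞ := ENNReal.prod_ne_top fun i _ => hfv i
  have hNT : ∏ i, wLpNorm n (f i) (v i) (p i) * tailNorm n (e i) (p i) (v i) c R = N * T :=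
    Finset.prod_mul_distrib
  have hloc := hloc f hf c R hR
  have hglob := hglob f hf c R hR
  rw [hNT] at hloc
  simp only [hNT] at hglob
  have hrpt : ∀ s : ℝ, r ^ s ≠ ∞ := fun s => ENNReal.rpow_ne_top_of_ne_zero hr0 hrt
  have hA1 : C₁ * r ^ ((n : ℝ) + δ) * (N * T) ≠ ∞ :=
    ENNReal.mul_ne_top (ENNReal.mul_ne_top hC₁ (hrpt _)) (ENNReal.mul_ne_top hNt hTt)
  have hA2 : C₂ * r ^ δ * (N * T) ≠ ∞ :=
    ENNReal.mul_ne_top (ENNReal.mul_ne_top hC₂ (hrpt _)) (ENNReal.mul_ne_top hNt hTt)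
  have hGm := measurable_commIntegrand hKmeas hbmeas hf
  have : SigmaFinite (pim n m) := by unfold pim; infer_instance
  obtain ⟨a, ha⟩ := exists_const_close (μ := volume.restrict (ball c R)) hGm
    (measurableSet_nearSet n m c R) c (ne_top_of_le_ne_top hA1 hloc) hA2
    ((ae_restrict_iff' measurableSet_ball).2 (Filter.Eventually.of_forall hglob))
  have hTP : AEStronglyMeasurable (TProdComm n m K b f) (volume.restrict (ball c R)) :=
    (hGm.stronglyMeasurable.integral_prod_right (ν := pim n m)).aestronglyMeasurable
  have : IsFiniteMeasure ((volume : Measure (Rn n)).restrict (ball c R)) :=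
    ⟨by rw [Measure.restrict_apply_univ]; exact measure_ball_lt_top⟩
  have hosc := osc_le hTP a
  rw [Measure.restrict_apply_univ] at ha hosc
  have hdev : ∫⁻ x in ball c R, ‖TProdComm n m K b f x - a‖ₑ ≤
      C₁ * r ^ ((n : ℝ) + δ) * (N * T) + C₂ * r ^ δ * (N * T) * V :=
    ha.trans (by gcongr)
  have hrV : r ^ ((n : ℝ) + δ) = V ^ (1 + δ / n) * ω ^ (-(1 + δ / n)) := by
    rw [hV, ENNReal.mul_rpow_of_ne_top (hrpt _) hωt, ← ENNReal.rpow_mul, mul_assoc,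
      ← ENNReal.rpow_add _ _ hω0 hωt]
    simp
    congr 1
    field_simp
  have hrV' : r ^ δ * V = ω * (V ^ (1 + δ / n) * ω ^ (-(1 + δ / n))) := by
    rw [← hrV, hV, ENNReal.rpow_add _ _ hr0 hrt]
    ring
  have hWV : W / V ^ (1 + δt / n) * V ^ (1 + δ / n) = W / V ^ ((δt - δ) / n) := by
    rw [div_eq_mul_inv W, div_eq_mul_inv W, ← ENNReal.rpow_neg, ← ENNReal.rpow_neg, mul_assoc,
      ← ENNReal.rpow_add _ _ hV0 hVt]
    congr 2
    ring
  calc _ ≤ W / V ^ (1 + δt / n) *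
        (2 * (C₁ * r ^ ((n : ℝ) + δ) * (N * T) + C₂ * r ^ δ * (N * T) * V)) := by
        gcongr
        exact hosc.trans (by gcongr)
    _ = 2 * (C₁ + C₂ * ω) * ω ^ (-(1 + δ / n)) *
        (W / V ^ (1 + δt / n) * V ^ (1 + δ / n) * T) * N := by
        rw [mul_right_comm _ (N * T) V, mul_assoc C₂, hrV', hrV]
        ring
    _ ≤ _ := by
        rw [hWV]
        gcongr
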